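/- arXiv:math/9809185 — 2 statements merged into one kernel-verified Lean document; each statement's English description precedes it below -/
import Mathlib

section
/- Let p, q ≥ 2 with q − 1 = d(p − 1) for an integer d ≥ 1. The assignment x_i ↦ x_{d·i} preserves the defining relations and hence determines a group homomorphism j₁ : F(p) → F(q), and j₁ is a quasi-isometric embedding: there is a constant C ≥ 1 such that for all x ∈ F(p), (1/C)·|x|_p ≤ |j₁(x)|_q ≤ C·|x|_p. -/
open scoped BigOperators

/-- Relators of Thompson's group `F(p)`: `x_i⁻¹ x_j x_i x_{j+p-1}⁻¹` for `i < j`. -/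
def thompsonRels (p : ℕ) : Set (FreeGroup ℕ) :=
  { rel | ∃ i j : ℕ, i < j ∧
      rel = (FreeGroup.of i)⁻¹ * FreeGroup.of j * FreeGroup.of i *
        (FreeGroup.of (j + p - 1))⁻¹ }

/-- Thompson's group `F(p)`, presented with generators `x_i` (`i : ℕ`) and relations
`x_i⁻¹ · x_j · x_i = x_{j+p-1}` for `i < j`. -/
def FP (p : ℕ) : Type := PresentedGroup (thompsonRels p)

instance (p : ℕ) : Group (FP p) :=
  inferInstanceAs (Group (PresentedGroup (thompsonRels p)))

/-- The generator `x_i` of `F(p)`. -/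
def xg (p : ℕ) (i : ℕ) : FP p := PresentedGroup.of (rels := thompsonRels p) i

/-- Word length of `x : G` with respect to a set `S` of generators: the least length of a
word in elements of `S ∪ S⁻¹` whose product is `x`. -/
noncomputable def wordLength {G : Type*} [Group G] (S : Set G) (x : G) : ℕ :=
  sInf { n : ℕ | ∃ w : List G, w.length = n ∧ (∀ g ∈ w, g ∈ S ∨ g⁻¹ ∈ S) ∧ w.prod = x }

/-- The word length `|x|_p` on `F(p)`, with respect to the generators `x_0, …, x_{p-1}`. -/
noncomputable def wlen (p : ℕ) (x : FP p) : ℕ :=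
  wordLength { g : FP p | ∃ i, i < p ∧ g = xg p i } x

/-- The data of a candidate normal form
`x_{i₁}^{r₁} ⋯ x_{iₙ}^{rₙ} · x_{jₘ}^{-sₘ} ⋯ x_{j₁}^{-s₁}` in `F(p)`. -/
structure NFData (p : ℕ) where
  n : ℕ
  m : ℕ
  i : Fin n → ℕ
  r : Fin n → ℕ
  j : Fin m → ℕ
  s : Fin m → ℕ

namespace NFData

variable {p : ℕ}

/-- The element of `F(p)` represented by the normal form data, namely
`x_{i₁}^{r₁} ⋯ x_{iₙ}^{rₙ} · (x_{j₁}^{s₁} ⋯ x_{jₘ}^{sₘ})⁻¹`. -/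
def elem (d : NFData p) : FP p :=
  (List.ofFn fun k => xg p (d.i k) ^ d.r k).prod *
    ((List.ofFn fun l => xg p (d.j l) ^ d.s l).prod)⁻¹

/-- The generator with index `a` occurs in `d` (with positive or negative exponent). -/
def Occurs (d : NFData p) (a : ℕ) : Prop :=
  (∃ k, d.i k = a) ∨ (∃ l, d.j l = a)

/-- `d` is a normal form of `x ∈ F(p)`: the indices are strictly increasing, the exponents
are at least `1`, `iₙ ≠ jₘ` when both parts are nonempty, whenever a generator and its
inverse both occur one of the following `p-1` generators (or its inverse) occurs as well,
and the corresponding product equals `x`. -/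
def IsNormalFormOf (d : NFData p) (x : FP p) : Prop :=
  StrictMono d.i ∧ StrictMono d.j ∧
    (∀ k, 1 ≤ d.r k) ∧ (∀ l, 1 ≤ d.s l) ∧
    (∀ (hn : 0 < d.n) (hm : 0 < d.m),
      d.i ⟨d.n - 1, Nat.sub_lt hn Nat.one_pos⟩ ≠ d.j ⟨d.m - 1, Nat.sub_lt hm Nat.one_pos⟩) ∧
    (∀ a : ℕ, (∃ k, d.i k = a) → (∃ l, d.j l = a) →
      ∃ b : ℕ, a < b ∧ b ≤ a + p - 1 ∧ d.Occurs b) ∧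
    x = d.elem

/-- The quantity `D(x) = r₁ + ⋯ + rₙ + s₁ + ⋯ + sₘ + iₙ + jₘ` (the terms `iₙ`, `jₘ` being
omitted when `n = 0`, resp. `m = 0`). -/
def D (d : NFData p) : ℕ :=
  (∑ k, d.r k) + (∑ l, d.s l) +
    (if hn : 0 < d.n then d.i ⟨d.n - 1, Nat.sub_lt hn Nat.one_pos⟩ else 0) +
    (if hm : 0 < d.m then d.j ⟨d.m - 1, Nat.sub_lt hm Nat.one_pos⟩ else 0)

end NFData

/-- The tail sum `r_k + r_{k+1} + ⋯ + r_n`. -/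
def tailSum {n : ℕ} (r : Fin n → ℕ) (k : Fin n) : ℕ :=
  ∑ l ∈ Finset.univ.filter (fun l => k ≤ l), r l
/-- `N(x)` associated to a normal form in `F(2)` (Theorem 3):
the maximum of `i_k + r_k + ⋯ + r_n + 1` and `j_l + s_l + ⋯ + s_m + 1`. -/
def NFData.N2 (d : NFData 2) : ℕ :=
  max (Finset.univ.sup fun k => d.i k + tailSum d.r k + 1)
      (Finset.univ.sup fun l => d.j l + tailSum d.s l + 1)

/-- `N(x)` associated to a normal form in `F(p)` (Theorem 6):
the maximum of `⌊i_k/(p-1)⌋ + r_k + ⋯ + r_n + 1` and `⌊j_l/(p-1)⌋ + s_l + ⋯ + s_m + 1`. -/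
def NFData.Ngen {p : ℕ} (d : NFData p) : ℕ :=
  max (Finset.univ.sup fun k => d.i k / (p - 1) + tailSum d.r k + 1)
      (Finset.univ.sup fun l => d.j l / (p - 1) + tailSum d.s l + 1)

/-- `N(x) = max { i_k + r_k + ⋯ + r_n + 1 }` for a positive word (Proposition 2). -/
def posN {n : ℕ} (i r : Fin n → ℕ) : ℕ :=
  Finset.univ.sup fun k => i k + tailSum r k + 1

/-- `N₁(x) = max { ⌊i_k/(p-1)⌋ + r_k + ⋯ + r_n + 1 }` (Proposition 4). -/
def posN1 (p : ℕ) {n : ℕ} (i r : Fin n → ℕ) : ℕ :=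
  Finset.univ.sup fun k => i k / (p - 1) + tailSum r k + 1

/-- `N₂(x) = max { i_k + (p-1)(r_k + ⋯ + r_n) + 1 }` (Proposition 5). -/
def posN2 (p : ℕ) {n : ℕ} (i r : Fin n → ℕ) : ℕ :=
  Finset.univ.sup fun k => i k + (p - 1) * tailSum r k + 1

/-- `x ∈ ℤ[1/p]`. -/
def IsPAdicRational (p : ℕ) (x : ℝ) : Prop :=
  ∃ (a : ℤ) (n : ℕ), x = (a : ℝ) / (p : ℝ) ^ n

/-- Thompson's group `F(p)` realized as a set of permutations of `ℝ`: orientation-preserving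
piecewise-linear homeomorphisms of `[0,1]` (extended by the identity outside `[0,1]`) with
finitely many breakpoints, all in `ℤ[1/p]`, whose slopes are integer powers of `p`. -/
def PLSet (p : ℕ) : Set (Equiv.Perm ℝ) :=
  { f | Monotone f ∧ (∀ t : ℝ, t ≤ 0 → f t = t) ∧ (∀ t : ℝ, 1 ≤ t → f t = t) ∧
    ∃ B : Finset ℝ, (∀ b ∈ B, IsPAdicRational p b) ∧
      ∀ t : ℝ, t ∉ (B : Set ℝ) →
        ∃ ε > (0 : ℝ), ∃ (k : ℤ) (c : ℝ), ∀ s : ℝ, |s - t| < ε → f s = (p : ℝ) ^ k * s + c }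

/-- The map `Φ_p` on homeomorphisms: `(Φ_p f)(t) = t` for `t ≤ 1 - 1/p`, and
`(Φ_p f)(t) = ((p-1) + f(pt - (p-1)))/p` for `t ≥ 1 - 1/p`. -/
noncomputable def PhiMap (p : ℕ) (f : ℝ → ℝ) : ℝ → ℝ := fun t =>
  if t ≤ 1 - 1 / (p : ℝ) then t
  else (((p : ℝ) - 1) + f ((p : ℝ) * t - ((p : ℝ) - 1))) / (p : ℝ)

/-- The piecewise-linear homeomorphism `f_i` of `ℝ` corresponding to the generator `x_i`
of `F(p)`. -/
noncomputable def fgen (p : ℕ) (i : ℕ) : ℝ → ℝ := fun t =>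
  if t ≤ (i : ℝ) then t
  else if t ≤ (i : ℝ) + 1 then (p : ℝ) * t + (i : ℝ) * (1 - (p : ℝ))
  else t + (p : ℝ) - 1
/-!
Write `p = m + 1` and `q = d * m + 1`. Every `x ∈ F(p)` is a fraction `u v⁻¹` of positive words
with no common right factor. Whether a generator is a right factor of a positive word can be read
off its sorted form (the generator `x_k` occurs, none of `x_{k+1}, …, x_{k+m}` does), and
multiplying all indices by `d` respects this criterion, so the image of a reduced fraction is again
reduced. A reduced fraction is minimal: any other fraction `P Q⁻¹` for the same element arises
from it by appending a common word `R` to both entries.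

An element of `F(q)` of length `N` is a fraction `P Q⁻¹` whose entries have at most `N` letters and
indices linear in `N`. By minimality the entries `j₁ u`, `j₁ v` of the reduced fraction for `j₁ x`
are left factors of `P` and `Q`, so they obey such bounds too, and a sorted positive word is no
longer, as a group element, than a linear function of its number of letters and its largest index.

Both the uniqueness of sorted forms and the bound on the indices of left factors come from the
action of the group on the real line by the piecewise linear maps `fgen`.
-/

namespace ThompsonGroup

/-! ### Word length -/

section WordLength

variable {G H : Type*} [Group G] [Group H] {S : Set G} {T : Set H}

theorem wordLength_prod_le {w : List G} (hw : ∀ g ∈ w, g ∈ S ∨ g⁻¹ ∈ S) :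
    wordLength S w.prod ≤ w.length :=
  Nat.sInf_le ⟨w, rfl, hw, rfl⟩

theorem exists_word_length_eq_wordLength (hS : Subgroup.closure S = ⊤) (x : G) :
    ∃ w : List G, w.length = wordLength S x ∧ (∀ g ∈ w, g ∈ S ∨ g⁻¹ ∈ S) ∧ w.prod = x := by
  have hx : x ∈ (Subgroup.closure S).toSubmonoid := by simp [hS]
  rw [Subgroup.closure_toSubmonoid] at hx
  obtain ⟨w, hw, hwx⟩ := Submonoid.exists_list_of_mem_closure hx
  exact Nat.sInf_mem (s := {n | ∃ w : List G, w.length = n ∧ (∀ g ∈ w, g ∈ S ∨ g⁻¹ ∈ S) ∧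
    w.prod = x}) ⟨w.length, w, rfl, hw, hwx⟩

theorem wordLength_one : wordLength S (1 : G) = 0 :=
  Nat.le_zero.mp (wordLength_prod_le (w := []) (by simp))

theorem wordLength_pow_le {x : G} (hx : x ∈ S) (n : ℕ) : wordLength S (x ^ n) ≤ n := by
  simpa using wordLength_prod_le (S := S) (w := List.replicate n x) (by grind)

theorem wordLength_mul_le (hS : Subgroup.closure S = ⊤) (x y : G) :
    wordLength S (x * y) ≤ wordLength S x + wordLength S y := by
  obtain ⟨v, hv, hvS, rfl⟩ := exists_word_length_eq_wordLength hS x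
  obtain ⟨w, hw, hwS, rfl⟩ := exists_word_length_eq_wordLength hS y
  rw [← hv, ← hw, ← List.prod_append, ← List.length_append]
  exact wordLength_prod_le (by grind)

theorem wordLength_inv_le (hS : Subgroup.closure S = ⊤) (x : G) :
    wordLength S x⁻¹ ≤ wordLength S x := by
  obtain ⟨w, hw, hwS, rfl⟩ := exists_word_length_eq_wordLength hS x
  rw [← hw, List.prod_inv_reverse]
  refine (wordLength_prod_le ?_).trans_eq (by simp)
  exact fun g hg ↦ by simpa [or_comm] using hwS g⁻¹ (by simpa using hg)

theorem eq_one_of_wordLength_eq_zero (hS : Subgroup.closure S = ⊤) {x : G}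
    (hx : wordLength S x = 0) : x = 1 := by
  obtain ⟨w, hw, -, rfl⟩ := exists_word_length_eq_wordLength hS x
  rw [List.length_eq_zero_iff.mp (hw.trans hx), List.prod_nil]

theorem wordLength_map_le (hS : Subgroup.closure S = ⊤) (f : G →* H) (hf : ∀ g ∈ S, f g ∈ T)
    (x : G) : wordLength T (f x) ≤ wordLength S x := by
  obtain ⟨w, hw, hwS, rfl⟩ := exists_word_length_eq_wordLength hS x
  rw [← hw, map_list_prod, ← List.length_map f]
  refine wordLength_prod_le fun g hg ↦ ?_
  obtain ⟨g, hgw, rfl⟩ := List.mem_map.mp hg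
  exact (hwS g hgw).imp (hf g) fun h ↦ map_inv f g ▸ hf _ h

end WordLength

variable {m : ℕ}

/-! ### Generators, relations and positive words -/

theorem xg_mul_xg {i j : ℕ} (hij : i < j) :
    xg (m + 1) j * xg (m + 1) i = xg (m + 1) i * xg (m + 1) (j + m) := by
  have hrel : (xg (m + 1) i)⁻¹ * xg (m + 1) j * xg (m + 1) i * (xg (m + 1) (j + m))⁻¹ = 1 :=
    PresentedGroup.one_of_mem (rels := thompsonRels (m + 1)) ⟨i, j, hij, rfl⟩
  rw [← mul_inv_eq_one.mp hrel]
  group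

/-- The homomorphism out of `F(m + 1)` sending `x_i` to `f i`, for a family `f` that satisfies the
defining relations. -/
def lift {G : Type*} [Group G] (f : ℕ → G) (hf : ∀ i j, i < j → f j * f i = f i * f (j + m)) :
    FP (m + 1) →* G :=
  PresentedGroup.toGroup (rels := thompsonRels (m + 1)) (f := f) <| by
    rintro _ ⟨i, j, hij, rfl⟩
    have hconj : f i * f (j + m) * (f i)⁻¹ = f j := mul_inv_eq_of_eq_mul (hf i j hij).symm
    simp [← add_assoc, ← hconj, mul_assoc]

theorem lift_xg {G : Type*} [Group G] (f : ℕ → G)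
    (hf : ∀ i j, i < j → f j * f i = f i * f (j + m)) (i : ℕ) : lift f hf (xg (m + 1) i) = f i :=
  PresentedGroup.toGroup.of _

theorem xg_mem_closure_generators (hm : 0 < m) (i : ℕ) :
    xg (m + 1) i ∈ Subgroup.closure {g | ∃ i, i < m + 1 ∧ g = xg (m + 1) i} := by
  induction i using Nat.strong_induction_on with
  | _ i ih =>
    rcases lt_or_ge m i with hi | hi
    · have hconj := xg_mul_xg (m := m) (Nat.sub_pos_of_lt hi)
      rw [Nat.sub_add_cancel hi.le, ← inv_mul_eq_iff_eq_mul] at hconj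
      rw [← hconj]
      exact mul_mem (inv_mem (ih 0 (by omega))) (mul_mem (ih _ (by omega)) (ih 0 (by omega)))
    · exact Subgroup.subset_closure ⟨i, by omega, rfl⟩

theorem closure_generators (hm : 0 < m) :
    Subgroup.closure {g | ∃ i, i < m + 1 ∧ g = xg (m + 1) i} = ⊤ := by
  have hrange : Subgroup.closure (Set.range (xg (m + 1))) = ⊤ := PresentedGroup.closure_range_of _
  rw [eq_top_iff, ← hrange, Subgroup.closure_le]
  rintro _ ⟨i, rfl⟩
  exact xg_mem_closure_generators hm i

/-- The positive element `x_{a₁} ⋯ x_{aₙ}` of `F(p)` spelled by the list `[a₁, …, aₙ]`. -/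
def posWord (p : ℕ) (l : List ℕ) : FP p := (l.map (xg p)).prod

@[simp]
theorem posWord_nil (p : ℕ) : posWord p [] = 1 := rfl

@[simp]
theorem posWord_cons (p a : ℕ) (l : List ℕ) : posWord p (a :: l) = xg p a * posWord p l := by
  simp [posWord]

@[simp]
theorem posWord_append (p : ℕ) (l l' : List ℕ) :
    posWord p (l ++ l') = posWord p l * posWord p l' := by
  simp [posWord]

theorem posWord_mul_xg {k : ℕ} {l : List ℕ} (hl : ∀ a ∈ l, k < a) :
    posWord (m + 1) l * xg (m + 1) k = xg (m + 1) k * posWord (m + 1) (l.map (· + m)) := by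
  induction l with
  | nil => simp
  | cons a l ih =>
    rw [List.forall_mem_cons] at hl
    rw [List.map_cons, posWord_cons, posWord_cons, mul_assoc, ih hl.2, ← mul_assoc,
      xg_mul_xg hl.1, mul_assoc]

/-- The homomorphism `F(m + 1) → ℤ` counting letters with sign. -/
def degree : FP (m + 1) →* Multiplicative ℤ :=
  lift (fun _ ↦ Multiplicative.ofAdd 1) fun _ _ _ ↦ rfl

theorem degree_posWord (l : List ℕ) :
    degree (posWord (m + 1) l) = Multiplicative.ofAdd (l.length : ℤ) := by
  induction l with
  | nil => rfl
  | cons a l ih =>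
    have hxg : degree (xg (m + 1) a) = Multiplicative.ofAdd 1 := lift_xg _ _ a
    simp [ih, hxg, ofAdd_add, mul_comm]

theorem length_eq_of_posWord_eq {l l' : List ℕ} (h : posWord (m + 1) l = posWord (m + 1) l') :
    l.length = l'.length := by
  simpa [degree_posWord] using congrArg degree h

/-! ### The action on the real line -/

theorem fgen_eq (i : ℕ) (t : ℝ) : fgen (m + 1) i t = t + m * max 0 (min 1 (t - i)) := by
  unfold fgen
  push_cast
  split_ifs with h₀ h₁
  · rw [min_eq_right (by linarith), max_eq_left (by linarith)]
    ring
  · rw [min_eq_right (by linarith), max_eq_right (by linarith)]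
    ring
  · rw [min_eq_left (by linarith), max_eq_right zero_le_one]
    ring

theorem le_fgen (i : ℕ) (t : ℝ) : t ≤ fgen (m + 1) i t := by
  rw [fgen_eq]
  exact le_add_of_nonneg_right (by positivity)

theorem fgen_le (i : ℕ) (t : ℝ) : fgen (m + 1) i t ≤ t + m := by
  rw [fgen_eq]
  gcongr
  exact mul_le_of_le_one_right m.cast_nonneg (max_le zero_le_one (min_le_left _ _))

theorem fgen_of_le {p i : ℕ} {t : ℝ} (ht : t ≤ i) : fgen p i t = t := if_pos ht

theorem fgen_eq_add_iff (hm : 0 < m) {i : ℕ} {t : ℝ} :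
    fgen (m + 1) i t = t + m ↔ (i : ℝ) + 1 ≤ t := by
  have hm' : (m : ℝ) ≠ 0 := by positivity
  rw [fgen_eq, add_right_inj, mul_eq_left₀ hm', max_eq_iff, min_eq_left_iff]
  constructor
  · rintro (⟨h, -⟩ | ⟨h, -⟩)
    · norm_num at h
    · linarith
  · exact fun h ↦ .inr ⟨by linarith, le_min zero_le_one (by linarith)⟩

theorem strictMono_fgen (i : ℕ) : StrictMono (fgen (m + 1) i) := by
  have hmono : Monotone fun t : ℝ ↦ m * max 0 (min 1 (t - i)) := fun s t hst ↦ by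
    dsimp only
    gcongr
  rw [funext (fgen_eq i)]
  exact strictMono_id.add_monotone hmono

theorem surjective_fgen (i : ℕ) : Function.Surjective (fgen (m + 1) i) := by
  have hcont : Continuous (fgen (m + 1) i) := by
    rw [funext (fgen_eq (m := m) i)]
    fun_prop
  refine hcont.surjective (Filter.tendsto_atTop_mono (le_fgen i) Filter.tendsto_id) ?_
  exact Filter.tendsto_atBot_mono (fgen_le i)
    (Filter.tendsto_atBot_add_const_right _ _ Filter.tendsto_id)

theorem fgen_fgen {i j : ℕ} (hij : i < j) (t : ℝ) :
    fgen (m + 1) i (fgen (m + 1) j t) = fgen (m + 1) (j + m) (fgen (m + 1) i t) := by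
  have hij' : (i : ℝ) + 1 ≤ j := by exact_mod_cast hij
  have fgen_of_ge : ∀ s : ℝ, (i : ℝ) + 1 ≤ s → fgen (m + 1) i s = s + m := fun s hs ↦ by
    rw [fgen_eq, min_eq_left (by linarith), max_eq_right zero_le_one, mul_one]
  rcases le_total t (i + 1) with ht | ht
  · have hfix : fgen (m + 1) i t ≤ (j + m : ℕ) := by
      push_cast
      linarith [fgen_le (m := m) i t]
    rw [fgen_of_le (ht.trans hij'), fgen_of_le hfix]
  · rw [fgen_of_ge t ht, fgen_of_ge _ (ht.trans (le_fgen j t)), fgen_eq j, fgen_eq (j + m)]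
    push_cast
    ring_nf

/-- The piecewise linear homeomorphism `fgen (m + 1) i` as a permutation of `ℝ`. -/
noncomputable def fgenPerm (m i : ℕ) : Equiv.Perm ℝ :=
  Equiv.ofBijective (fgen (m + 1) i) ⟨(strictMono_fgen i).injective, surjective_fgen i⟩

/-- The piecewise linear action of `F(m + 1)` on `ℝ`, with `x_i` acting as `fgen (m + 1) i`. It is
a right action, whence the opposite group. -/
noncomputable def plAction : FP (m + 1) →* (Equiv.Perm ℝ)ᵐᵒᵖ :=
  lift (fun i ↦ .op (fgenPerm m i)) fun _ _ hij ↦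
    congrArg MulOpposite.op (Equiv.ext (fgen_fgen hij))

/-- The piecewise linear homeomorphism of `ℝ` by which `g` acts. -/
noncomputable def plMap (g : FP (m + 1)) (t : ℝ) : ℝ := (plAction g).unop t

@[simp]
theorem plMap_one (t : ℝ) : plMap (1 : FP (m + 1)) t = t := by
  simp [plMap]

@[simp]
theorem plMap_mul (g h : FP (m + 1)) (t : ℝ) : plMap (g * h) t = plMap h (plMap g t) := by
  simp [plMap]

@[simp]
theorem plMap_xg (i : ℕ) (t : ℝ) : plMap (xg (m + 1) i) t = fgen (m + 1) i t :=
  congrArg (fun σ : (Equiv.Perm ℝ)ᵐᵒᵖ ↦ σ.unop t) (lift_xg _ _ i)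

theorem le_plMap_posWord (l : List ℕ) (t : ℝ) : t ≤ plMap (posWord (m + 1) l) t := by
  induction l generalizing t with
  | nil => simp
  | cons a l ih => simpa using (le_fgen a t).trans (ih _)

theorem plMap_posWord_le (l : List ℕ) (t : ℝ) :
    plMap (posWord (m + 1) l) t ≤ t + m * l.length := by
  induction l generalizing t with
  | nil => simp
  | cons a l ih =>
    simp only [posWord_cons, plMap_mul, plMap_xg, List.length_cons]
    push_cast
    linarith [ih (fgen (m + 1) a t), fgen_le (m := m) a t]

theorem plMap_posWord_of_forall_le {l : List ℕ} {t : ℝ} (h : ∀ a ∈ l, t ≤ (a : ℕ)) :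
    plMap (posWord (m + 1) l) t = t := by
  induction l with
  | nil => simp
  | cons a l ih =>
    rw [List.forall_mem_cons] at h
    simp [fgen_of_le h.1, ih h.2]

/-- Applied in turn, starting from the point `t`, each letter of `l` acts by the full translation
by `m`. This depends only on the group element `posWord (m + 1) l`, passes to factors, and bounds
the indices in `l`. -/
def FullyTranslates (m : ℕ) (l : List ℕ) (t : ℝ) : Prop :=
  plMap (posWord (m + 1) l) t = t + m * l.length

theorem FullyTranslates.congr {l l' : List ℕ} {t : ℝ} (h : FullyTranslates m l t)
    (hl : posWord (m + 1) l = posWord (m + 1) l') : FullyTranslates m l' t := by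
  rwa [FullyTranslates, ← hl, ← length_eq_of_posWord_eq hl]

theorem fullyTranslates_nil (t : ℝ) : FullyTranslates m [] t := by
  simp [FullyTranslates]

theorem fullyTranslates_append {l l' : List ℕ} {t : ℝ} :
    FullyTranslates m (l ++ l') t ↔
      FullyTranslates m l t ∧ FullyTranslates m l' (t + m * l.length) := by
  have hl := plMap_posWord_le (m := m) l t
  have hl' := plMap_posWord_le (m := m) l' (plMap (posWord (m + 1) l) t)
  simp only [FullyTranslates, posWord_append, plMap_mul, List.length_append, Nat.cast_add]
  constructor
  · intro h
    have hlt : plMap (posWord (m + 1) l) t = t + m * l.length := by linarith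
    rw [hlt] at h
    exact ⟨hlt, by linarith⟩
  · rintro ⟨h, h'⟩
    rw [h, h']
    ring

theorem fullyTranslates_cons (hm : 0 < m) {a : ℕ} {l : List ℕ} {t : ℝ} :
    FullyTranslates m (a :: l) t ↔ (a : ℝ) + 1 ≤ t ∧ FullyTranslates m l (t + m) := by
  rw [← List.singleton_append, fullyTranslates_append, ← fgen_eq_add_iff hm]
  simp [FullyTranslates]

theorem FullyTranslates.mono (hm : 0 < m) {l : List ℕ} {s t : ℝ} (h : FullyTranslates m l s)
    (hst : s ≤ t) : FullyTranslates m l t := by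
  induction l generalizing s t with
  | nil => exact fullyTranslates_nil t
  | cons a l ih =>
    rw [fullyTranslates_cons hm] at h ⊢
    exact ⟨h.1.trans hst, ih h.2 (by gcongr)⟩

theorem FullyTranslates.add_one_le (hm : 0 < m) {l : List ℕ} {t : ℝ} (h : FullyTranslates m l t)
    {a : ℕ} (ha : a ∈ l) : (a : ℝ) + 1 ≤ t + m * l.length := by
  obtain ⟨l₁, l₂, rfl⟩ := List.append_of_mem ha
  rw [fullyTranslates_append, fullyTranslates_cons hm] at h
  refine h.2.1.trans ?_
  gcongr
  simp

/-! ### Sorted words -/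

theorem posWord_cons_ne (hm : 0 < m) {a : ℕ} {l l' : List ℕ} (h : ∀ b ∈ l', a < b) :
    posWord (m + 1) (a :: l) ≠ posWord (m + 1) l' := by
  intro heq
  -- The left side moves the point `a + 1`, the right side fixes it.
  have hfix : plMap (posWord (m + 1) l') (a + 1) = a + 1 :=
    plMap_posWord_of_forall_le fun b hb ↦ by exact_mod_cast h b hb
  rw [← heq, posWord_cons, plMap_mul, plMap_xg, (fgen_eq_add_iff hm).mpr le_rfl] at hfix
  have hm' : (0 : ℝ) < m := by exact_mod_cast hm
  linarith [le_plMap_posWord (m := m) l (a + 1 + m)]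

theorem posWord_injOn_sortedLE (hm : 0 < m) :
    Set.InjOn (posWord (m + 1)) {l : List ℕ | l.SortedLE} := by
  intro l hl l' hl' heq
  simp only [Set.mem_ofPred_eq, List.sortedLE_iff_pairwise] at hl hl'
  induction l generalizing l' with
  | nil =>
    cases l' with
    | nil => rfl
    | cons b l' => exact (posWord_cons_ne hm (by simp) heq.symm).elim
  | cons a l ih =>
    cases l' with
    | nil => exact (posWord_cons_ne hm (by simp) heq).elim
    | cons b l' =>
      rw [List.pairwise_cons] at hl hl'
      obtain hab | rfl | hab := lt_trichotomy a b
      · exact (posWord_cons_ne hm (by grind) heq).elim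
      · rw [posWord_cons, posWord_cons, mul_right_inj] at heq
        rw [ih heq hl.2 hl'.2]
      · exact (posWord_cons_ne hm (by grind) heq.symm).elim

theorem filter_le_append_filter_lt {α : Type*} [LinearOrder α] {l : List α} (hl : l.SortedLE)
    (k : α) : l.filter (· ≤ k) ++ l.filter (k < ·) = l := by
  rw [List.sortedLE_iff_pairwise] at hl
  induction l with
  | nil => rfl
  | cons a l ih =>
    rw [List.pairwise_cons] at hl
    rcases le_or_gt a k with hak | hak
    · simp [hak, hak.not_gt, ih hl.2]
    · have hlt : ∀ b ∈ l, k < b := fun b hb ↦ hak.trans_le (hl.1 b hb)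
      have hnil : l.filter (· ≤ k) = [] := by simpa using hlt
      have hself : l.filter (k < ·) = l := by simpa using hlt
      simp [hak, hak.not_ge, hnil, hself]

/-- The sorted form of the product of a sorted word `l` with `x_k`: moving `x_k` to its place past
the larger letters raises their indices by `m`. -/
def insertGenerator (m k : ℕ) (l : List ℕ) : List ℕ :=
  l.filter (· ≤ k) ++ k :: (l.filter (k < ·)).map (· + m)

theorem mem_insertGenerator {k b : ℕ} {l : List ℕ} :
    b ∈ insertGenerator m k l ↔ (b ∈ l ∧ b ≤ k) ∨ b = k ∨ ∃ a ∈ l, k < a ∧ a + m = b := by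
  simp [insertGenerator, and_assoc]

theorem sortedLE_insertGenerator {k : ℕ} {l : List ℕ} (hl : l.SortedLE) :
    (insertGenerator m k l).SortedLE := by
  rw [List.sortedLE_iff_pairwise] at hl ⊢
  rw [insertGenerator, List.pairwise_append, List.pairwise_cons, List.pairwise_map]
  simp only [List.forall_mem_cons, List.forall_mem_map, List.mem_filter, decide_eq_true_eq]
  exact ⟨hl.filter _, ⟨by grind, (hl.filter _).imp (by grind)⟩, by grind⟩

theorem posWord_insertGenerator {k : ℕ} {l : List ℕ} (hl : l.SortedLE) :
    posWord (m + 1) (insertGenerator m k l) = posWord (m + 1) l * xg (m + 1) k := by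
  conv_rhs => rw [← filter_le_append_filter_lt hl k]
  rw [insertGenerator, posWord_append, posWord_append, posWord_cons, mul_assoc,
    posWord_mul_xg (by simp)]

theorem exists_sortedLE_posWord_eq (m : ℕ) (l : List ℕ) :
    ∃ l' : List ℕ, l'.SortedLE ∧ posWord (m + 1) l' = posWord (m + 1) l := by
  induction l using List.reverseRecOn with
  | nil => exact ⟨[], List.Pairwise.nil.sortedLE, rfl⟩
  | append_singleton l k ih =>
    obtain ⟨l', hl', heq⟩ := ih
    exact ⟨insertGenerator m k l', sortedLE_insertGenerator hl', by
      simp [posWord_insertGenerator hl', heq]⟩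

/-! ### Right divisibility in the positive monoid -/

/-- The generator `x_k` is a right factor of `g` with positive cofactor. -/
def RightDivides {p : ℕ} (k : ℕ) (g : FP p) : Prop :=
  ∃ w : List ℕ, posWord p w * xg p k = g

theorem exists_append_singleton_of_mem {l : List ℕ} {k : ℕ} (hl : l.SortedLE)
    (hle : ∀ a ∈ l, a ≤ k) (hk : k ∈ l) : ∃ l', l = l' ++ [k] := by
  obtain rfl | ⟨l', b, rfl⟩ := l.eq_nil_or_concat'
  · simp at hk
  · rw [List.sortedLE_iff_pairwise, List.pairwise_append] at hl
    have hkb : k ≤ b := (List.mem_append.mp hk).elim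
      (fun h ↦ hl.2.2 k h b (List.mem_singleton_self b)) fun h ↦ (List.mem_singleton.mp h).le
    exact ⟨l', by rw [(hle b (by simp)).antisymm hkb]⟩

theorem rightDivides_posWord_iff (hm : 0 < m) {k : ℕ} {l : List ℕ} (hl : l.SortedLE) :
    RightDivides k (posWord (m + 1) l) ↔ k ∈ l ∧ ∀ a ∈ l, a ≤ k ∨ k + m < a := by
  constructor
  · rintro ⟨w, hw⟩
    obtain ⟨w', hw', heq⟩ := exists_sortedLE_posWord_eq m w
    rw [← heq, ← posWord_insertGenerator hw'] at hw
    obtain rfl := posWord_injOn_sortedLE hm (sortedLE_insertGenerator hw') hl hw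
    simp only [mem_insertGenerator]
    grind
  · rintro ⟨hk, hgap⟩
    obtain ⟨l₁, h₁⟩ : ∃ l₁, l.filter (· ≤ k) = l₁ ++ [k] :=
      exists_append_singleton_of_mem (hl.pairwise.filter _).sortedLE (by simp) (by simpa using hk)
    obtain ⟨l₂, h₂⟩ : l.filter (k < ·) ∈ Set.range (List.map (· + m)) := by
      rw [Set.range_list_map]
      exact fun a ha ↦ ⟨a - m, by grind⟩
    have hlt : ∀ b ∈ l₂, k < b := fun b hb ↦ by
      have hmem : b + m ∈ l.filter (k < ·) := h₂ ▸ List.mem_map_of_mem hb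
      grind
    refine ⟨l₁ ++ l₂, ?_⟩
    rw [← filter_le_append_filter_lt hl k, h₁, ← h₂]
    simp [mul_assoc, posWord_mul_xg hlt]

theorem rightDivides_mul_xg_of_lt (hm : 0 < m) {j k : ℕ} (hjk : j < k) {w : List ℕ}
    (h : RightDivides k (posWord (m + 1) w * xg (m + 1) j)) :
    ∃ c, j < c ∧ c + m = k ∧ RightDivides c (posWord (m + 1) w) := by
  obtain ⟨l, hl, heq⟩ := exists_sortedLE_posWord_eq m w
  rw [← heq] at h ⊢
  rw [← posWord_insertGenerator hl, rightDivides_posWord_iff hm (sortedLE_insertGenerator hl)] at h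
  simp only [mem_insertGenerator] at h
  obtain ⟨c, hcl, hjc, hck⟩ : ∃ c ∈ l, j < c ∧ c + m = k := by grind
  refine ⟨c, hjc, hck, (rightDivides_posWord_iff hm hl).mpr ⟨hcl, fun a ha ↦ ?_⟩⟩
  rcases le_or_gt a j with haj | haj
  · omega
  · have := h.2 (a + m) (.inr (.inr ⟨a, ha, haj, rfl⟩))
    omega

theorem rightDivides_mul_xg_of_gt (hm : 0 < m) {j k : ℕ} (hkj : k < j) {w : List ℕ}
    (h : RightDivides k (posWord (m + 1) w * xg (m + 1) j)) :
    k + m < j ∧ RightDivides k (posWord (m + 1) w) := by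
  obtain ⟨l, hl, heq⟩ := exists_sortedLE_posWord_eq m w
  rw [← heq] at h ⊢
  rw [← posWord_insertGenerator hl, rightDivides_posWord_iff hm (sortedLE_insertGenerator hl)] at h
  simp only [mem_insertGenerator] at h
  have hgap : k + m < j := (h.2 j (.inr (.inl rfl))).resolve_left hkj.not_ge
  refine ⟨hgap, (rightDivides_posWord_iff hm hl).mpr ⟨by grind, fun a ha ↦ ?_⟩⟩
  rcases le_or_gt a j with haj | haj
  · exact h.2 a (.inl ⟨ha, haj⟩)
  · omega

/-! ### Fractions -/

theorem exists_common_right_multiple (m i : ℕ) (u : List ℕ) :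
    ∃ u' t : List ℕ, posWord (m + 1) u * posWord (m + 1) t = xg (m + 1) i * posWord (m + 1) u' ∧
      t.length ≤ 1 ∧ ∀ a ∈ t, a ≤ i + m * u.length := by
  induction u generalizing i with
  | nil => exact ⟨[], [i], by simp⟩
  | cons j u ih =>
    have hlen : m * (j :: u).length = m * u.length + m := by simp [mul_add]
    obtain hij | rfl | hji := lt_trichotomy i j
    · obtain ⟨u', t, heq, ht, hbound⟩ := ih i
      refine ⟨(j + m) :: u', t, ?_, ht, by grind⟩
      rw [posWord_cons, mul_assoc, heq, ← mul_assoc, xg_mul_xg hij, posWord_cons, mul_assoc]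
    · exact ⟨u, [], by simp⟩
    · obtain ⟨u', t, heq, ht, hbound⟩ := ih (i + m)
      refine ⟨j :: u', t, ?_, ht, by grind⟩
      rw [posWord_cons, mul_assoc, heq, ← mul_assoc, ← xg_mul_xg hji, posWord_cons, mul_assoc]

/-- `x` is a fraction `u v⁻¹` of positive words with at most `n` letters each, whose indices are
controlled by `FullyTranslates m · (m + 1 + m * n)`. -/
def IsFractionOfSize (x : FP (m + 1)) (n : ℕ) : Prop :=
  ∃ u v : List ℕ, x * posWord (m + 1) v = posWord (m + 1) u ∧ u.length ≤ n ∧ v.length ≤ n ∧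
    FullyTranslates m u (m + 1 + m * n) ∧ FullyTranslates m v (m + 1 + m * n)

theorem IsFractionOfSize.xg_mul (hm : 0 < m) {x : FP (m + 1)} {n i : ℕ}
    (h : IsFractionOfSize x n) (hi : i < m + 1) :
    IsFractionOfSize (xg (m + 1) i * x) (n + 1) := by
  obtain ⟨u, v, heq, hu, hv, hut, hvt⟩ := h
  have hi' : (i : ℝ) ≤ m := by exact_mod_cast Nat.le_of_lt_succ hi
  have hmn : (0 : ℝ) ≤ m * n := by positivity
  refine ⟨i :: u, v, by rw [posWord_cons, mul_assoc, heq], by simpa using hu, by omega,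
    (fullyTranslates_cons hm).mpr ⟨?_, hut.mono hm ?_⟩, hvt.mono hm ?_⟩ <;>
  · push_cast
    linarith

theorem IsFractionOfSize.inv_xg_mul (hm : 0 < m) {x : FP (m + 1)} {n i : ℕ}
    (h : IsFractionOfSize x n) (hi : i < m + 1) :
    IsFractionOfSize ((xg (m + 1) i)⁻¹ * x) (n + 1) := by
  obtain ⟨u, v, heq, hu, hv, hut, hvt⟩ := h
  obtain ⟨u', t, hcomm, ht, hbound⟩ := exists_common_right_multiple m i u
  have hi' : i ≤ m := Nat.le_of_lt_succ hi
  have hword : posWord (m + 1) (u ++ t) = posWord (m + 1) (i :: u') := by simpa using hcomm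
  have hlen : u.length + t.length = u'.length + 1 := by simpa using length_eq_of_posWord_eq hword
  have htt : ∀ s : ℝ, (m : ℝ) + 1 + m * n ≤ s → FullyTranslates m t s := fun s hs ↦ by
    rcases t with _ | ⟨a, _ | ⟨b, t⟩⟩
    · exact fullyTranslates_nil s
    · have ha : a ≤ m + m * n := (hbound a (by simp)).trans (by gcongr)
      have ha' : (a : ℝ) ≤ m + m * n := by exact_mod_cast ha
      exact (fullyTranslates_cons hm).mpr ⟨by linarith, fullyTranslates_nil _⟩
    · simp at ht
  have hutt : FullyTranslates m (u ++ t) (m + 1 + m * n) :=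
    fullyTranslates_append.mpr ⟨hut, htt _ (le_add_of_nonneg_right (by positivity))⟩
  have hstep : (m : ℝ) + 1 + m * (n + 1 : ℕ) = m + 1 + m * n + m := by push_cast; ring
  refine ⟨u', v ++ t, ?_, by omega, by rw [List.length_append]; omega, ?_, ?_⟩
  · rw [mul_assoc, inv_mul_eq_iff_eq_mul, ← hcomm, posWord_append, ← mul_assoc, heq]
  · rw [hstep]
    exact ((fullyTranslates_cons hm).mp (hutt.congr hword)).2
  · rw [hstep]
    refine fullyTranslates_append.mpr ⟨hvt.mono hm (by simp), htt _ ?_⟩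
    have hnonneg : (0 : ℝ) ≤ m + m * v.length := by positivity
    linarith

theorem exists_isFractionOfSize (hm : 0 < m) (x : FP (m + 1)) :
    IsFractionOfSize x (wlen (m + 1) x) := by
  obtain ⟨w, hw, hgen, rfl⟩ := exists_word_length_eq_wordLength (closure_generators hm) x
  rw [wlen, ← hw]
  clear hw
  induction w with
  | nil => exact ⟨[], [], by simp, le_rfl, le_rfl, fullyTranslates_nil _, fullyTranslates_nil _⟩
  | cons g w ih =>
    rw [List.forall_mem_cons] at hgen
    rw [List.prod_cons, List.length_cons]
    obtain ⟨i, hi, rfl⟩ | ⟨i, hi, hgi⟩ := hgen.1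
    · exact (ih hgen.2).xg_mul hm hi
    · rw [← inv_inv g, hgi]
      exact (ih hgen.2).inv_xg_mul hm hi

/-- The elements `U` and `V` have no common right factor among the generators. -/
def IsReduced {p : ℕ} (U V : FP p) : Prop :=
  ∀ k, ¬ (RightDivides k U ∧ RightDivides k V)

theorem exists_isReduced_fraction (hm : 0 < m) (x : FP (m + 1)) :
    ∃ u v : List ℕ, u.SortedLE ∧ v.SortedLE ∧ x * posWord (m + 1) v = posWord (m + 1) u ∧
      IsReduced (posWord (m + 1) u) (posWord (m + 1) v) := by
  obtain ⟨u₀, v₀, h₀, -⟩ := exists_isFractionOfSize hm x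
  obtain ⟨⟨u, v⟩, huv, hmin⟩ := exists_minimalFor_of_wellFoundedLT
    (fun w : List ℕ × List ℕ ↦ x * posWord (m + 1) w.2 = posWord (m + 1) w.1)
    (fun w ↦ w.1.length) ⟨(u₀, v₀), h₀⟩
  obtain ⟨u', hu', hueq⟩ := exists_sortedLE_posWord_eq m u
  obtain ⟨v', hv', hveq⟩ := exists_sortedLE_posWord_eq m v
  refine ⟨u', v', hu', hv', by rw [hueq, hveq, huv], ?_⟩
  rw [hueq, hveq]
  rintro k ⟨⟨w, hw⟩, w', hw'⟩
  have hcancel : x * posWord (m + 1) w' = posWord (m + 1) w := by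
    rw [← mul_left_inj (xg (m + 1) k), mul_assoc, hw', hw, huv]
  have hlen : w.length + 1 = u.length := by
    simpa using length_eq_of_posWord_eq (l := w ++ [k]) (by simpa using hw)
  have := hmin (j := (w, w')) hcancel
  grind

theorem IsReduced.rightDivides {u v r : List ℕ} {k : ℕ} (hm : 0 < m)
    (huv : IsReduced (posWord (m + 1) u) (posWord (m + 1) v))
    (hu : RightDivides k (posWord (m + 1) u * posWord (m + 1) r))
    (hv : RightDivides k (posWord (m + 1) v * posWord (m + 1) r)) :
    RightDivides k (posWord (m + 1) r) := by
  induction r using List.reverseRecOn generalizing k with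
  | nil => exact (huv k ⟨by simpa using hu, by simpa using hv⟩).elim
  | append_singleton r j ih =>
    have hsplit (w : List ℕ) : posWord (m + 1) w * posWord (m + 1) (r ++ [j]) =
        posWord (m + 1) (w ++ r) * xg (m + 1) j := by simp [mul_assoc]
    rw [hsplit] at hu hv
    obtain hkj | rfl | hjk := lt_trichotomy k j
    · obtain ⟨hgap, hu'⟩ := rightDivides_mul_xg_of_gt hm hkj hu
      obtain ⟨-, hv'⟩ := rightDivides_mul_xg_of_gt hm hkj hv
      obtain ⟨s, hs⟩ := ih (by simpa using hu') (by simpa using hv')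
      obtain ⟨c, rfl⟩ : ∃ c, j = c + m := ⟨j - m, by omega⟩
      refine ⟨s ++ [c], ?_⟩
      simp [← hs, mul_assoc, xg_mul_xg (show k < c by omega)]
    · exact ⟨r, by simp⟩
    · obtain ⟨c, hjc, rfl, hu'⟩ := rightDivides_mul_xg_of_lt hm hjk hu
      obtain ⟨c', -, hc', hv'⟩ := rightDivides_mul_xg_of_lt hm hjk hv
      obtain rfl : c' = c := by omega
      obtain ⟨s, hs⟩ := ih (by simpa using hu') (by simpa using hv')
      refine ⟨s ++ [j], ?_⟩
      simp [← hs, mul_assoc, xg_mul_xg hjc]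

theorem IsReduced.exists_mul_eq {u v r P Q s : List ℕ} (hm : 0 < m)
    (huv : IsReduced (posWord (m + 1) u) (posWord (m + 1) v))
    (hP : posWord (m + 1) u * posWord (m + 1) r = posWord (m + 1) P * posWord (m + 1) s)
    (hQ : posWord (m + 1) v * posWord (m + 1) r = posWord (m + 1) Q * posWord (m + 1) s) :
    ∃ R : List ℕ, posWord (m + 1) (u ++ R) = posWord (m + 1) P ∧
      posWord (m + 1) (v ++ R) = posWord (m + 1) Q := by
  induction s using List.reverseRecOn generalizing r with
  | nil => exact ⟨r, by simpa using hP, by simpa using hQ⟩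
  | append_singleton s k ih =>
    have hdiv {U W : List ℕ} (h : posWord (m + 1) U * posWord (m + 1) r =
        posWord (m + 1) W * posWord (m + 1) (s ++ [k])) :
        RightDivides k (posWord (m + 1) U * posWord (m + 1) r) :=
      ⟨W ++ s, by simp [h, mul_assoc]⟩
    obtain ⟨r', hr'⟩ := huv.rightDivides hm (hdiv hP) (hdiv hQ)
    refine ih (r := r') ?_ ?_ <;> rw [← mul_left_inj (xg (m + 1) k)]
    · simpa [mul_assoc, hr'] using hP
    · simpa [mul_assoc, hr'] using hQ

theorem IsReduced.exists_append_eq (hm : 0 < m) {x : FP (m + 1)} {u v P Q : List ℕ}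
    (huv : IsReduced (posWord (m + 1) u) (posWord (m + 1) v))
    (hx : x * posWord (m + 1) v = posWord (m + 1) u)
    (hx' : x * posWord (m + 1) Q = posWord (m + 1) P) :
    ∃ R : List ℕ, posWord (m + 1) (u ++ R) = posWord (m + 1) P ∧
      posWord (m + 1) (v ++ R) = posWord (m + 1) Q := by
  obtain ⟨r, s, hrs, -⟩ :=
    exists_isFractionOfSize hm ((posWord (m + 1) u)⁻¹ * posWord (m + 1) P)
  refine huv.exists_mul_eq hm (r := r) (s := s) ?_ ?_
  · rw [← hrs]
    group
  · rw [← hrs, ← hx, ← hx']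
    group

/-! ### Length of sorted positive words -/

theorem wlen_mul_le (hm : 0 < m) (x y : FP (m + 1)) :
    wlen (m + 1) (x * y) ≤ wlen (m + 1) x + wlen (m + 1) y :=
  wordLength_mul_le (closure_generators hm) x y

theorem wlen_inv_le (hm : 0 < m) (x : FP (m + 1)) : wlen (m + 1) x⁻¹ ≤ wlen (m + 1) x :=
  wordLength_inv_le (closure_generators hm) x

theorem wlen_xg_pow_le {p i : ℕ} (hi : i < p) (n : ℕ) : wlen p (xg p i ^ n) ≤ n :=
  wordLength_pow_le (S := {g | ∃ i, i < p ∧ g = xg p i}) ⟨i, hi, rfl⟩ n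

theorem xg_zero_pow_mul_xg {i : ℕ} (hi : 0 < i) (c : ℕ) :
    xg (m + 1) 0 ^ c * xg (m + 1) (i + m * c) = xg (m + 1) i * xg (m + 1) 0 ^ c := by
  induction c with
  | zero => simp
  | succ c ih =>
    rw [pow_succ, mul_assoc, mul_add_one, ← add_assoc, ← xg_mul_xg (by omega), ← mul_assoc, ih,
      mul_assoc]

theorem exists_xg_zero_pow_mul_xg (hm : 0 < m) (a : ℕ) :
    ∃ r < m + 1, xg (m + 1) 0 ^ ((a - 1) / m) * xg (m + 1) a =
      xg (m + 1) r * xg (m + 1) 0 ^ ((a - 1) / m) := by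
  rcases Nat.eq_zero_or_pos a with rfl | ha
  · exact ⟨0, by omega, by simp⟩
  · have hmod := Nat.mod_lt (a - 1) hm
    have hdiv := Nat.mod_add_div (a - 1) m
    refine ⟨(a - 1) % m + 1, by omega, ?_⟩
    rw [← xg_zero_pow_mul_xg (by omega)]
    congr 2
    omega

/-- Each letter `x_a` is conjugate to one of the generators `x_0, …, x_m` by the power of `x_0` with
exponent `(a - 1) / m`. As `l` is sorted, these powers telescope. -/
theorem wlen_xg_zero_pow_mul_posWord_le (hm : 0 < m) {l : List ℕ} (hl : l.SortedLE) {c h : ℕ}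
    (hch : c ≤ h) (hc : ∀ a ∈ l, c ≤ (a - 1) / m) (hh : ∀ a ∈ l, (a - 1) / m ≤ h) :
    wlen (m + 1) (xg (m + 1) 0 ^ c * posWord (m + 1) l) + c ≤ l.length + 2 * h := by
  rw [List.sortedLE_iff_pairwise] at hl
  induction l generalizing c with
  | nil =>
    have := wlen_xg_pow_le (p := m + 1) (i := 0) (by omega) c
    rw [posWord_nil, mul_one, List.length_nil]
    omega
  | cons a l ih =>
    rw [List.pairwise_cons] at hl
    rw [List.forall_mem_cons] at hc hh
    obtain ⟨r, hr, hconj⟩ := exists_xg_zero_pow_mul_xg hm a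
    set e := (a - 1) / m
    have hfactor : xg (m + 1) 0 ^ c * posWord (m + 1) (a :: l) = (xg (m + 1) 0 ^ (e - c))⁻¹ *
        (xg (m + 1) r ^ 1 * (xg (m + 1) 0 ^ e * posWord (m + 1) l)) := by
      rw [eq_inv_mul_iff_mul_eq, ← mul_assoc, ← pow_add, Nat.sub_add_cancel hc.1, posWord_cons,
        pow_one, ← mul_assoc, hconj, mul_assoc]
    have hmono : ∀ b ∈ l, e ≤ (b - 1) / m := fun b hb ↦
      Nat.div_le_div_right (Nat.sub_le_sub_right (hl.1 b hb) 1)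
    have hrest := ih hl.2 hh.1 hmono hh.2
    have hpow := (wlen_inv_le hm _).trans
      (wlen_xg_pow_le (p := m + 1) (i := 0) (by omega) (e - c))
    have hgen := wlen_xg_pow_le hr 1
    have htri := wlen_mul_le hm (xg (m + 1) 0 ^ (e - c))⁻¹
      (xg (m + 1) r ^ 1 * (xg (m + 1) 0 ^ e * posWord (m + 1) l))
    have htri' := wlen_mul_le hm (xg (m + 1) r ^ 1) (xg (m + 1) 0 ^ e * posWord (m + 1) l)
    rw [hfactor, List.length_cons]
    omega

theorem wlen_posWord_le (hm : 0 < m) {l : List ℕ} (hl : l.SortedLE) {h : ℕ}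
    (hh : ∀ a ∈ l, a ≤ h) : wlen (m + 1) (posWord (m + 1) l) ≤ l.length + 2 * h := by
  simpa using wlen_xg_zero_pow_mul_posWord_le hm hl h.zero_le (fun _ _ ↦ Nat.zero_le _)
    fun a ha ↦ (Nat.div_le_self _ _).trans ((a.sub_le 1).trans (hh a ha))

/-! ### The embedding -/

variable {d : ℕ}

/-- The homomorphism `j₁ : F(m + 1) → F(d * m + 1)` sending `x_i` to `x_{d * i}`. -/
def indexScaling (m : ℕ) (hd : 0 < d) : FP (m + 1) →* FP (d * m + 1) :=
  lift (fun i ↦ xg (d * m + 1) (d * i)) fun i j hij ↦ by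
    rw [xg_mul_xg (Nat.mul_lt_mul_of_pos_left hij hd), mul_add]

theorem indexScaling_xg (hd : 0 < d) (i : ℕ) :
    indexScaling m hd (xg (m + 1) i) = xg (d * m + 1) (d * i) :=
  lift_xg _ _ i

theorem indexScaling_posWord (hd : 0 < d) (l : List ℕ) :
    indexScaling m hd (posWord (m + 1) l) = posWord (d * m + 1) (l.map (d * ·)) := by
  simp [posWord, map_list_prod, Function.comp_def, indexScaling_xg]

theorem wlen_indexScaling_le (hm : 0 < m) (hd : 0 < d) (x : FP (m + 1)) :
    wlen (d * m + 1) (indexScaling m hd x) ≤ wlen (m + 1) x := by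
  refine wordLength_map_le (closure_generators hm) _ ?_ x
  rintro _ ⟨i, hi, rfl⟩
  exact ⟨d * i, Nat.lt_succ_of_le (Nat.mul_le_mul_left d (Nat.le_of_lt_succ hi)),
    indexScaling_xg hd i⟩

theorem exists_rightDivides_of_map_mul (hm : 0 < m) (hd : 0 < d) {l : List ℕ} (hl : l.SortedLE)
    {k : ℕ} (h : RightDivides k (posWord (d * m + 1) (l.map (d * ·)))) :
    ∃ k', d * k' = k ∧ RightDivides k' (posWord (m + 1) l) := by
  have hsorted : (l.map (d * ·)).SortedLE := (strictMono_mul_left_of_pos hd).sortedLE_listMap.mpr hl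
  rw [rightDivides_posWord_iff (Nat.mul_pos hd hm) hsorted] at h
  obtain ⟨k', hk', rfl⟩ := List.mem_map.mp h.1
  refine ⟨k', rfl, (rightDivides_posWord_iff hm hl).mpr ⟨hk', fun a ha ↦ ?_⟩⟩
  refine (h.2 (d * a) (List.mem_map_of_mem ha)).imp (Nat.le_of_mul_le_mul_left · hd) fun hlt ↦ ?_
  rw [← mul_add] at hlt
  exact Nat.lt_of_mul_lt_mul_left hlt

theorem IsReduced.map_mul (hm : 0 < m) (hd : 0 < d) {u v : List ℕ} (hu : u.SortedLE)
    (hv : v.SortedLE) (h : IsReduced (posWord (m + 1) u) (posWord (m + 1) v)) :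
    IsReduced (posWord (d * m + 1) (u.map (d * ·))) (posWord (d * m + 1) (v.map (d * ·))) := by
  rintro k ⟨hku, hkv⟩
  obtain ⟨k', rfl, hu'⟩ := exists_rightDivides_of_map_mul hm hd hu hku
  obtain ⟨k'', hk'', hv'⟩ := exists_rightDivides_of_map_mul hm hd hv hkv
  obtain rfl := Nat.eq_of_mul_eq_mul_left hd hk''
  exact h _ ⟨hu', hv'⟩

theorem wlen_posWord_le_of_map_mul_append (hm : 0 < m) (hd : 0 < d) {l R P : List ℕ}
    (hl : l.SortedLE) {n : ℕ}
    (heq : posWord (d * m + 1) (l.map (d * ·) ++ R) = posWord (d * m + 1) P)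
    (hP : P.length ≤ n) (htrans : FullyTranslates (d * m) P ((d * m : ℕ) + 1 + (d * m : ℕ) * n)) :
    wlen (m + 1) (posWord (m + 1) l) ≤ (1 + 6 * (d * m)) * n := by
  have hlen : l.length ≤ n := by
    have hlen := length_eq_of_posWord_eq heq
    rw [List.length_append, List.length_map] at hlen
    omega
  have hscaled := (fullyTranslates_append.mp (htrans.congr heq.symm)).1
  have hindex : ∀ a ∈ l, a ≤ 3 * (d * m) * n := fun a ha ↦ by
    have hn : 0 < n := (List.length_pos_of_mem ha).trans_le hlen
    have hbound := hscaled.add_one_le (Nat.mul_pos hd hm) (List.mem_map_of_mem ha)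
    rw [List.length_map] at hbound
    norm_cast at hbound
    have hmono : d * m * l.length ≤ d * m * n := Nat.mul_le_mul_left _ hlen
    have hone : d * m ≤ d * m * n := Nat.le_mul_of_pos_right _ hn
    have had : a ≤ d * a := Nat.le_mul_of_pos_left a hd
    linarith
  calc wlen (m + 1) (posWord (m + 1) l) ≤ l.length + 2 * (3 * (d * m) * n) :=
        wlen_posWord_le hm hl hindex
    _ ≤ n + 2 * (3 * (d * m) * n) := by gcongr
    _ = (1 + 6 * (d * m)) * n := by ring

theorem wlen_le_mul_wlen_indexScaling (hm : 0 < m) (hd : 0 < d) (x : FP (m + 1)) :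
    wlen (m + 1) x ≤ 2 * (1 + 6 * (d * m)) * wlen (d * m + 1) (indexScaling m hd x) := by
  obtain ⟨u, v, hu, hv, hx, hred⟩ := exists_isReduced_fraction hm x
  obtain ⟨P, Q, hPQ, hP, hQ, hPt, hQt⟩ :=
    exists_isFractionOfSize (Nat.mul_pos hd hm) (indexScaling m hd x)
  have hscaled : indexScaling m hd x * posWord (d * m + 1) (v.map (d * ·)) =
      posWord (d * m + 1) (u.map (d * ·)) := by
    rw [← indexScaling_posWord hd, ← indexScaling_posWord hd, ← map_mul, hx]
  obtain ⟨R, hRP, hRQ⟩ :=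
    (hred.map_mul hm hd hu hv).exists_append_eq (Nat.mul_pos hd hm) hscaled hPQ
  have hulen := wlen_posWord_le_of_map_mul_append hm hd hu hRP hP hPt
  have hvlen := wlen_posWord_le_of_map_mul_append hm hd hv hRQ hQ hQt
  calc wlen (m + 1) x = wlen (m + 1) (posWord (m + 1) u * (posWord (m + 1) v)⁻¹) := by
        rw [← hx, mul_inv_cancel_right]
    _ ≤ wlen (m + 1) (posWord (m + 1) u) + wlen (m + 1) (posWord (m + 1) v) :=
        (wlen_mul_le hm _ _).trans (Nat.add_le_add_left (wlen_inv_le hm _) _)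
    _ ≤ 2 * (1 + 6 * (d * m)) * wlen (d * m + 1) (indexScaling m hd x) := by linarith

theorem injective_indexScaling (hm : 0 < m) (hd : 0 < d) :
    Function.Injective (indexScaling m hd) := by
  refine (injective_iff_map_eq_one _).mpr fun x hx ↦ ?_
  have hlen := wlen_le_mul_wlen_indexScaling hm hd x
  rw [hx, show wlen (d * m + 1) 1 = 0 from wordLength_one, mul_zero] at hlen
  exact eq_one_of_wordLength_eq_zero (closure_generators hm) (Nat.le_zero.mp hlen)

end ThompsonGroup

open ThompsonGroup

/-- Proposition 8. If `q - 1 = d(p - 1)`, the assignment `x_i ↦ x_{d·i}`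
determines a group homomorphism `j₁ : F(p) → F(q)` which is a quasi-isometric embedding. -/
theorem statement4 (p q d : ℕ) (hp : 2 ≤ p) (hq : 2 ≤ q) (hd : 1 ≤ d)
    (hpq : q - 1 = d * (p - 1)) :
    ∃ j1 : FP p →* FP q, (∀ i : ℕ, j1 (xg p i) = xg q (d * i)) ∧
      Function.Injective j1 ∧
      ∃ C : ℝ, 1 ≤ C ∧ ∀ x : FP p,
        (1 / C) * (wlen p x : ℝ) ≤ (wlen q (j1 x) : ℝ) ∧
          (wlen q (j1 x) : ℝ) ≤ C * (wlen p x : ℝ) := by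
  obtain ⟨m, rfl⟩ : ∃ m, p = m + 1 := ⟨p - 1, by omega⟩
  have hm : 0 < m := by omega
  obtain rfl : q = d * m + 1 := by
    rw [Nat.add_sub_cancel] at hpq
    omega
  have hC : (1 : ℝ) ≤ (2 * (1 + 6 * (d * m)) : ℕ) := by
    exact_mod_cast (by omega : 1 ≤ 2 * (1 + 6 * (d * m)))
  refine ⟨indexScaling m hd, indexScaling_xg hd, injective_indexScaling hm hd, _, hC,
    fun x ↦ ⟨?_, ?_⟩⟩
  · rw [one_div, inv_mul_le_iff₀ (zero_lt_one.trans_le hC)]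
    exact_mod_cast wlen_le_mul_wlen_indexScaling hm hd x
  · refine le_trans ?_ (le_mul_of_one_le_left (Nat.cast_nonneg _) hC)
    exact_mod_cast wlen_indexScaling_le hm hd x
end

section
/- Let p, q ≥ 2 with q − 1 = d(p − 1) for an integer d ≥ 1. The assignment x_i ↦ x_i^d preserves the defining relations and hence determines a group homomorphism j₂ : F(q) → F(p), and j₂ is a quasi-isometric embedding: there is a constant C ≥ 1 such that for all x ∈ F(q), (1/C)·|x|_q ≤ |j₂(x)|_p ≤ C·|x|_q. -/
open scoped BigOperators

/-!
A positive word of `F(p)` describes a `p`-ary forest, `x_i` adding a caret to the leaf `i`, and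
`j₂` replaces each `q`-ary caret by a left comb of `d` carets, each hung on the leftmost leaf of the
previous one. The forest of a positive word `u` is therefore completed to one in the image of `j₂`
by hanging combs on its leaves, as long as needed to make every left depth a multiple of `d`, and
the resulting `q`-ary forest has at most as many carets as `u` has letters. An element `x` with
`|j₂ x|_p = n` gives `j₂ x = u v⁻¹` with `u`, `v` positive words of length at most `n` in letters
bounded linearly in `n`. Left depths extend to an action of `F(p)` on `ℝ × ℤ` for which the image of
`j₂` preserves depths modulo `d`. So `u` and `v` have the same completion, which cancels in
`u v⁻¹`, and `x` is the quotient of two short positive words of `F(q)`.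
-/

section WordLength

variable {G H : Type*} [Group G] [Group H] {S : Set G} {T : Set H}

lemma wordLength_prod_le_length {w : List G} (hw : ∀ s ∈ w, s ∈ S ∨ s⁻¹ ∈ S) :
    wordLength S w.prod ≤ w.length :=
  Nat.sInf_le ⟨w, rfl, hw, rfl⟩

lemma exists_list_length_eq_wordLength {g : G} (hg : g ∈ Subgroup.closure S) :
    ∃ w : List G, w.length = wordLength S g ∧ (∀ s ∈ w, s ∈ S ∨ s⁻¹ ∈ S) ∧ w.prod = g := by
  rw [← Subgroup.mem_toSubmonoid, Subgroup.closure_toSubmonoid] at hg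
  obtain ⟨w, hw, hprod⟩ := Submonoid.exists_list_of_mem_closure hg
  exact Nat.sInf_mem (s := {n | ∃ w : List G, w.length = n ∧ _}) ⟨w.length, w, rfl, hw, hprod⟩

lemma wordLength_one : wordLength S 1 = 0 :=
  Nat.le_zero.mp (wordLength_prod_le_length (w := []) (by simp))

lemma wordLength_le_one {s : G} (hs : s ∈ S ∨ s⁻¹ ∈ S) : wordLength S s ≤ 1 := by
  simpa using wordLength_prod_le_length (w := [s]) (by simpa using hs)

lemma wordLength_mul_le (hS : Subgroup.closure S = ⊤) (g h : G) :
    wordLength S (g * h) ≤ wordLength S g + wordLength S h := by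
  obtain ⟨v, hv, hvS, rfl⟩ := exists_list_length_eq_wordLength (hS ▸ Subgroup.mem_top g)
  obtain ⟨w, hw, hwS, rfl⟩ := exists_list_length_eq_wordLength (hS ▸ Subgroup.mem_top h)
  rw [← hv, ← hw, ← List.prod_append, ← List.length_append]
  refine wordLength_prod_le_length fun s hs => ?_
  exact (List.mem_append.mp hs).elim (hvS s) (hwS s)

lemma wordLength_inv_le (hS : Subgroup.closure S = ⊤) (g : G) :
    wordLength S g⁻¹ ≤ wordLength S g := by
  obtain ⟨w, hw, hwS, rfl⟩ := exists_list_length_eq_wordLength (hS ▸ Subgroup.mem_top g)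
  have hinv : ∀ s ∈ (w.map (·⁻¹)).reverse, s ∈ S ∨ s⁻¹ ∈ S := fun s hs => by
    simpa [or_comm] using hwS s⁻¹ (by simpa using hs)
  simpa [List.prod_inv_reverse, ← hw] using wordLength_prod_le_length hinv

lemma wordLength_pow_le (hS : Subgroup.closure S = ⊤) (g : G) (n : ℕ) :
    wordLength S (g ^ n) ≤ n * wordLength S g := by
  induction n with
  | zero => simp [wordLength_one]
  | succ n ih =>
    rw [pow_succ, Nat.succ_mul]
    exact (wordLength_mul_le hS _ _).trans (Nat.add_le_add_right ih _)

lemma wordLength_map_le (hS : Subgroup.closure S = ⊤) (hT : Subgroup.closure T = ⊤)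
    (φ : G →* H) {C : ℕ} (hC : ∀ s ∈ S, wordLength T (φ s) ≤ C) (g : G) :
    wordLength T (φ g) ≤ C * wordLength S g := by
  have hC' : ∀ s, s ∈ S ∨ s⁻¹ ∈ S → wordLength T (φ s) ≤ C := by
    rintro s (hs | hs)
    · exact hC s hs
    · simpa using (wordLength_inv_le hT (φ s⁻¹)).trans (hC _ hs)
  obtain ⟨w, hw, hwS, rfl⟩ := exists_list_length_eq_wordLength (hS ▸ Subgroup.mem_top g)
  rw [← hw]
  clear hw
  induction w with
  | nil => simp [wordLength_one]
  | cons s w ih =>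
    rw [List.forall_mem_cons] at hwS
    calc wordLength T (φ (s :: w).prod)
        ≤ wordLength T (φ s) + wordLength T (φ w.prod) := by
          simpa using wordLength_mul_le hT (φ s) (φ w.prod)
      _ ≤ C + C * w.length := add_le_add (hC' s hwS.1) (ih hwS.2)
      _ = C * (s :: w).length := by rw [List.length_cons]; ring

end WordLength

lemma zmod_val_sub_one_add_one {d : ℕ} [NeZero d] (a : ZMod d) :
    (a - 1).val + 1 = a.val ∨ a.val = 0 ∧ (a - 1).val + 1 = d := by
  rcases a.val.eq_zero_or_pos with h | h
  · have hcast : a - 1 = (d - 1 : ℕ) := by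
      rw [Nat.cast_pred (NeZero.pos d), ZMod.natCast_self, (ZMod.val_eq_zero a).mp h]
    rw [hcast, ZMod.val_natCast_of_lt (Nat.sub_one_lt (NeZero.ne d))]
    exact Or.inr ⟨h, Nat.sub_add_cancel (NeZero.pos d)⟩
  · have hcast : a - 1 = (a.val - 1 : ℕ) := by rw [Nat.cast_pred h, ZMod.natCast_zmod_val]
    rw [hcast, ZMod.val_natCast_of_lt ((Nat.sub_le _ 1).trans_lt a.val_lt)]
    exact Or.inl (Nat.sub_add_cancel h)

namespace Thompson

section Presentation

variable {p : ℕ} [NeZero p]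

lemma semiconjBy_xg {i j : ℕ} (h : i < j) :
    SemiconjBy (xg p i) (xg p (j + (p - 1))) (xg p j) := by
  have hrel : (xg p i)⁻¹ * xg p j * xg p i * (xg p (j + p - 1))⁻¹ = 1 :=
    PresentedGroup.one_of_mem (rels := thompsonRels p) ⟨i, j, h, rfl⟩
  rw [Nat.add_sub_assoc NeZero.one_le, mul_inv_eq_one, mul_assoc, inv_mul_eq_iff_eq_mul] at hrel
  exact hrel.symm

lemma semiconjBy_xg_pow {i j : ℕ} (h : i < j) (n : ℕ) :
    SemiconjBy (xg p i ^ n) (xg p (j + n * (p - 1))) (xg p j) := by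
  induction n with
  | zero => simp
  | succ n ih =>
    rw [pow_succ, Nat.succ_mul, ← add_assoc]
    exact ih.mul_left (semiconjBy_xg (h.trans_le (Nat.le_add_right _ _)))

lemma closure_range_xg (p : ℕ) : Subgroup.closure (Set.range (xg p)) = ⊤ :=
  PresentedGroup.closure_range_of (thompsonRels p)

lemma map_mem_of_forall_xg {p : ℕ} {G : Type*} [Group G] {φ : FP p →* G} {K : Subgroup G}
    (h : ∀ i, φ (xg p i) ∈ K) (g : FP p) : φ g ∈ K := by
  have hle : Subgroup.closure (Set.range (xg p)) ≤ K.comap φ :=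
    (Subgroup.closure_le _).mpr (Set.range_subset_iff.mpr h)
  exact hle (closure_range_xg p ▸ Subgroup.mem_top g)

/-- The homomorphism `x_i ↦ f i` out of `F(p)`, for a sequence `f` satisfying the defining
relations. -/
def lift {G : Type*} [Group G] (f : ℕ → G)
    (hf : ∀ i j, i < j → SemiconjBy (f i) (f (j + (p - 1))) (f j)) : FP p →* G :=
  PresentedGroup.toGroup (f := f) (rels := thompsonRels p) <| by
    rintro _ ⟨i, j, hij, rfl⟩
    simp only [map_mul, map_inv, FreeGroup.lift_apply_of]
    rw [Nat.add_sub_assoc NeZero.one_le, mul_inv_eq_one, mul_assoc, inv_mul_eq_iff_eq_mul]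
    exact (hf i j hij).symm

@[simp] lemma lift_xg {G : Type*} [Group G] (f : ℕ → G)
    (hf : ∀ i j, i < j → SemiconjBy (f i) (f (j + (p - 1))) (f j)) (i : ℕ) :
    lift f hf (xg p i) = f i :=
  PresentedGroup.toGroup.of _

/-- The homomorphism `j₂ : F(q) → F(p)`, `x_i ↦ x_i ^ d`, where `q - 1 = d (p - 1)`. -/
def powHom {q d : ℕ} [NeZero q] (hpq : q - 1 = d * (p - 1)) : FP q →* FP p :=
  lift (fun i => xg p i ^ d) fun _ _ hij => by
    rw [hpq]
    exact (semiconjBy_xg_pow hij d).pow_right d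

@[simp] lemma powHom_xg {q d : ℕ} [NeZero q] (hpq : q - 1 = d * (p - 1)) (i : ℕ) :
    powHom hpq (xg q i) = xg p i ^ d :=
  lift_xg _ _ i

end Presentation

section PositiveWords

variable {p : ℕ}

/-- The positive element `x_{i₁} ⋯ x_{iₙ}` of `F(p)` spelled by the word `[i₁, …, iₙ]`. -/
def posWord (p : ℕ) (l : List ℕ) : FP p := (l.map (xg p)).prod

@[simp] lemma posWord_nil : posWord p [] = 1 := rfl

@[simp] lemma posWord_cons (i : ℕ) (l : List ℕ) :
    posWord p (i :: l) = xg p i * posWord p l :=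
  List.prod_cons

@[simp] lemma posWord_append (l l' : List ℕ) :
    posWord p (l ++ l') = posWord p l * posWord p l' := by
  simp [posWord]

/-- The words of length at most `n` in the letters `0, …, m`. -/
def boundedWords (n m : ℕ) : Set (List ℕ) := {l | l.length ≤ n ∧ ∀ a ∈ l, a ≤ m}

lemma nil_mem_boundedWords (n m : ℕ) : [] ∈ boundedWords n m := by
  simp [boundedWords]

lemma boundedWords_mono {n n' m m' : ℕ} (hn : n ≤ n') (hm : m ≤ m') :
    boundedWords n m ⊆ boundedWords n' m' :=
  fun _ hl => ⟨hl.1.trans hn, fun a ha => (hl.2 a ha).trans hm⟩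

lemma cons_mem_boundedWords {n m i : ℕ} {l : List ℕ} :
    i :: l ∈ boundedWords (n + 1) m ↔ i ≤ m ∧ l ∈ boundedWords n m := by
  simp [boundedWords, and_left_comm]

lemma append_mem_boundedWords {n n' m : ℕ} {l l' : List ℕ} (hl : l ∈ boundedWords n m)
    (hl' : l' ∈ boundedWords n' m) : l ++ l' ∈ boundedWords (n + n') m :=
  ⟨by simpa using add_le_add hl.1 hl'.1,
    fun a ha => (List.mem_append.mp ha).elim (hl.2 a) (hl'.2 a)⟩

lemma exists_sorted_posWord_eq_xg_mul [NeZero p] (i : ℕ) {l : List ℕ}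
    (hl : l.Pairwise (· ≤ ·)) :
    ∃ l' : List ℕ, l'.Pairwise (· ≤ ·) ∧ posWord p l' = xg p i * posWord p l ∧
      l'.length = l.length + 1 ∧
      ∀ a ∈ l', a ∈ l ∨ (i ≤ a ∧ a ≤ i + l.length * (p - 1)) := by
  induction l generalizing i with
  | nil => exact ⟨[i], by simp⟩
  | cons j l ih =>
    rcases le_or_gt i j with hij | hji
    · refine ⟨i :: j :: l, ?_, by simp, rfl, ?_⟩
      · refine List.pairwise_cons.mpr ⟨?_, hl⟩
        simpa [hij] using fun a ha => hij.trans ((List.pairwise_cons.mp hl).1 a ha)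
      · simp +contextual
    · obtain ⟨hj, hl⟩ := List.pairwise_cons.mp hl
      obtain ⟨l', hsorted, hprod, hlength, hmem⟩ := ih (i + (p - 1)) hl
      refine ⟨j :: l', ?_, ?_, by simp [hlength], ?_⟩
      · refine List.pairwise_cons.mpr ⟨fun a ha => ?_, hsorted⟩
        rcases hmem a ha with h | h
        · exact hj a h
        · omega
      · rw [posWord_cons, posWord_cons, hprod, ← mul_assoc, ← mul_assoc,
          (semiconjBy_xg hji).eq]
      · intro a ha
        rw [List.length_cons, Nat.succ_mul]
        rcases List.mem_cons.mp ha with rfl | ha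
        · simp
        · rcases hmem a ha with h | h
          · simp [h]
          · omega

lemma exists_sorted_posWord_eq [NeZero p] {n m : ℕ} {l : List ℕ} (hl : l ∈ boundedWords n m) :
    ∃ l' ∈ boundedWords n (m + n * (p - 1)),
      l'.Pairwise (· ≤ ·) ∧ posWord p l' = posWord p l := by
  induction l generalizing n with
  | nil => exact ⟨[], nil_mem_boundedWords _ _, by simp, rfl⟩
  | cons i l ih =>
    obtain ⟨n, rfl⟩ := Nat.exists_eq_add_one.mpr ((Nat.succ_pos l.length).trans_le hl.1)
    obtain ⟨hi, hl⟩ := cons_mem_boundedWords.mp hl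
    obtain ⟨v, hv, hsorted, hprod⟩ := ih hl
    obtain ⟨l', hsorted', hprod', hlength, hmem⟩ :=
      exists_sorted_posWord_eq_xg_mul (p := p) i hsorted
    have hvn : v.length * (p - 1) ≤ n * (p - 1) := Nat.mul_le_mul_right _ hv.1
    refine ⟨l', ⟨by have := hv.1; omega, fun a ha => ?_⟩, hsorted', by
      rw [hprod', hprod, posWord_cons]⟩
    rw [Nat.succ_mul]
    rcases hmem a ha with h | h
    · have := hv.2 a h
      omega
    · omega

lemma exists_xg_mul_posWord_eq [NeZero p] (i : ℕ) {n m : ℕ} {l : List ℕ}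
    (hl : l ∈ boundedWords n m) :
    ∃ l' ∈ boundedWords n (m + (p - 1)), ∃ t ∈ boundedWords 1 (i + n * (p - 1)),
      xg p i * posWord p l' = posWord p l * posWord p t := by
  induction l generalizing i n with
  | nil => exact ⟨[], nil_mem_boundedWords _ _, [i], by simp [boundedWords], by simp⟩
  | cons j l ih =>
    obtain ⟨n, rfl⟩ := Nat.exists_eq_add_one.mpr ((Nat.succ_pos l.length).trans_le hl.1)
    obtain ⟨hj, hl'⟩ := cons_mem_boundedWords.mp hl
    rw [Nat.succ_mul]
    rcases lt_trichotomy i j with hij | rfl | hji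
    · obtain ⟨v, hv, t, ht, h⟩ := ih i hl'
      refine ⟨(j + (p - 1)) :: v, cons_mem_boundedWords.mpr ⟨by omega, hv⟩, t,
        boundedWords_mono le_rfl (by omega) ht, ?_⟩
      rw [posWord_cons, posWord_cons, mul_assoc, ← h, ← mul_assoc, ← mul_assoc,
        (semiconjBy_xg hij).eq]
    · exact ⟨l, boundedWords_mono (Nat.le_succ n) (Nat.le_add_right m _) hl', [],
        nil_mem_boundedWords _ _, by simp⟩
    · obtain ⟨v, hv, t, ht, h⟩ := ih (i + (p - 1)) hl'
      refine ⟨j :: v, cons_mem_boundedWords.mpr ⟨by omega, hv⟩, t,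
        boundedWords_mono le_rfl (by omega) ht, ?_⟩
      rw [posWord_cons, posWord_cons, mul_assoc, ← h, ← mul_assoc, ← mul_assoc,
        (semiconjBy_xg hji).eq]

end PositiveWords

section WordLength

lemma wlen_xg_le_one {p i : ℕ} (h : i < p) : wlen p (xg p i) ≤ 1 :=
  wordLength_le_one (Or.inl ⟨i, h, rfl⟩)

variable {p : ℕ} [p.AtLeastTwo]

lemma exists_xg_zero_pow_mul_xg (i : ℕ) : ∃ r < p,
    xg p 0 ^ ((i - 1) / (p - 1)) * xg p i = xg p r * xg p 0 ^ ((i - 1) / (p - 1)) := by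
  have hp : 2 ≤ p := Nat.AtLeastTwo.prop
  rcases Nat.eq_zero_or_pos i with rfl | hi
  · exact ⟨0, by omega, by simp⟩
  · have hmod := Nat.mod_lt (i - 1) (show 0 < p - 1 by omega)
    have hdiv := Nat.mod_add_div' (i - 1) (p - 1)
    refine ⟨1 + (i - 1) % (p - 1), by omega, ?_⟩
    rw [← (semiconjBy_xg_pow (by omega) _).eq]
    congr 2
    omega

variable (p) in
lemma closure_xg_lt : Subgroup.closure {g : FP p | ∃ i, i < p ∧ g = xg p i} = ⊤ := by
  rw [eq_top_iff, ← closure_range_xg p, Subgroup.closure_le]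
  rintro _ ⟨i, rfl⟩
  have hmem : ∀ r < p, xg p r ∈ Subgroup.closure {g : FP p | ∃ i, i < p ∧ g = xg p i} :=
    fun r hr => Subgroup.subset_closure ⟨r, hr, rfl⟩
  have hpow := Subgroup.pow_mem _ (hmem 0 (NeZero.pos p)) ((i - 1) / (p - 1))
  obtain ⟨r, hr, h⟩ := exists_xg_zero_pow_mul_xg (p := p) i
  rw [SetLike.mem_coe, ← Subgroup.mul_mem_cancel_left _ hpow, h]
  exact Subgroup.mul_mem _ (hmem r hr) hpow

/-- A sorted word is spelled by conjugating letters of `{0, …, p - 1}` by powers of `x_0`; as the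
exponents increase along the word, consecutive powers partly cancel and only `2K - k` letters
`x_0^{±1}` remain. -/
lemma wlen_xg_zero_pow_mul_posWord_le {K : ℕ} {l : List ℕ} (hl : l.Pairwise (· ≤ ·))
    (hK : ∀ i ∈ l, (i - 1) / (p - 1) ≤ K) {k : ℕ} (hkK : k ≤ K)
    (hk : ∀ i ∈ l, k ≤ (i - 1) / (p - 1)) :
    wlen p (xg p 0 ^ k * posWord p l) ≤ l.length + (2 * K - k) := by
  have hS := closure_xg_lt p
  have hpow : ∀ e, wlen p (xg p 0 ^ e) ≤ e := fun e =>
    (wordLength_pow_le hS _ e).trans (mul_le_of_le_one_right' (wlen_xg_le_one (NeZero.pos p)))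
  induction l generalizing k with
  | nil => simpa using (hpow k).trans (by omega)
  | cons i l ih =>
    obtain ⟨hi, hl⟩ := List.pairwise_cons.mp hl
    rw [List.forall_mem_cons] at hK hk
    obtain ⟨r, hr, h⟩ := exists_xg_zero_pow_mul_xg (p := p) i
    set κ := (i - 1) / (p - 1)
    have hsplit : xg p 0 ^ k * posWord p (i :: l) =
        (xg p 0 ^ (κ - k))⁻¹ * (xg p r * (xg p 0 ^ κ * posWord p l)) := by
      rw [← mul_assoc (xg p r), ← h, posWord_cons, eq_inv_mul_iff_mul_eq, ← mul_assoc,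
        ← mul_assoc, ← pow_add, Nat.sub_add_cancel hk.1]
    have htail : wlen p (xg p 0 ^ κ * posWord p l) ≤ l.length + (2 * K - κ) :=
      ih hl hK.2 hK.1 fun a ha => Nat.div_le_div_right (Nat.sub_le_sub_right (hi a ha) 1)
    have hhead : wlen p (xg p 0 ^ (κ - k))⁻¹ ≤ κ - k := (wordLength_inv_le hS _).trans (hpow _)
    have hletter := wlen_xg_le_one hr
    have hmul := wordLength_mul_le hS (xg p 0 ^ (κ - k))⁻¹ (xg p r * (xg p 0 ^ κ * posWord p l))
    have hmul' := wordLength_mul_le hS (xg p r) (xg p 0 ^ κ * posWord p l)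
    rw [hsplit, List.length_cons]
    unfold wlen at *
    omega

lemma wlen_posWord_le {n m : ℕ} {l : List ℕ} (hl : l ∈ boundedWords n m) :
    wlen p (posWord p l) ≤ 2 * p * (n + m) := by
  obtain ⟨v, ⟨hlength, hletters⟩, hsorted, hprod⟩ := exists_sorted_posWord_eq (p := p) hl
  have h := wlen_xg_zero_pow_mul_posWord_le (p := p) hsorted
    (fun i hi => (Nat.div_le_self _ _).trans ((Nat.sub_le i 1).trans (hletters i hi)))
    (Nat.zero_le _) (fun _ _ => Nat.zero_le _)
  rw [pow_zero, one_mul, hprod, Nat.sub_zero] at h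
  obtain ⟨s, rfl⟩ : ∃ s, p = s + 1 := Nat.exists_eq_add_one.mpr (NeZero.pos p)
  calc _ ≤ n + 2 * (m + n * s) := h.trans (Nat.add_le_add_right hlength _)
    _ ≤ 2 * (s + 1) * (n + m) := by nlinarith [Nat.zero_le (s * m)]

lemma wlen_xg_le (i : ℕ) : wlen p (xg p i) ≤ 2 * p * (1 + i) := by
  simpa using wlen_posWord_le (p := p) (l := [i]) (n := 1) (m := i) (by simp [boundedWords])

lemma exists_prod_mul_posWord_eq {w : List (FP p)}
    (hw : ∀ s ∈ w, s ∈ {g : FP p | ∃ i, i < p ∧ g = xg p i} ∨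
      s⁻¹ ∈ {g : FP p | ∃ i, i < p ∧ g = xg p i}) :
    ∃ u ∈ boundedWords w.length (w.length * p), ∃ v ∈ boundedWords w.length (w.length * p),
      w.prod * posWord p v = posWord p u := by
  induction w with
  | nil => exact ⟨[], nil_mem_boundedWords _ _, [], nil_mem_boundedWords _ _, by simp⟩
  | cons s w ih =>
    obtain ⟨hs, hw⟩ := List.forall_mem_cons.mp hw
    obtain ⟨u, hu, v, hv, h⟩ := ih hw
    rw [List.length_cons, Nat.succ_mul, List.prod_cons]
    rcases hs with ⟨i, hi, rfl⟩ | ⟨i, hi, hs⟩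
    · exact ⟨i :: u,
        cons_mem_boundedWords.mpr ⟨by omega, boundedWords_mono le_rfl (by omega) hu⟩, v,
        boundedWords_mono (by omega) (by omega) hv, by rw [mul_assoc, h, posWord_cons]⟩
    · obtain ⟨u', hu', t, ht, h'⟩ := exists_xg_mul_posWord_eq (p := p) i hu
      have hle : w.length * (p - 1) ≤ w.length * p := Nat.mul_le_mul_left _ (Nat.sub_le p 1)
      refine ⟨u', boundedWords_mono (by omega) (by omega) hu', v ++ t,
        append_mem_boundedWords (boundedWords_mono le_rfl (by omega) hv)
          (boundedWords_mono le_rfl (by omega) ht), ?_⟩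
      rw [posWord_append, mul_assoc, ← mul_assoc w.prod, h, ← h', inv_eq_iff_eq_inv.mp hs,
        inv_mul_cancel_left]

lemma exists_mul_posWord_eq (g : FP p) :
    ∃ u ∈ boundedWords (wlen p g) (wlen p g * p), ∃ v ∈ boundedWords (wlen p g) (wlen p g * p),
      g * posWord p v = posWord p u := by
  obtain ⟨w, hlength, hw, rfl⟩ :=
    exists_list_length_eq_wordLength (closure_xg_lt p ▸ Subgroup.mem_top g)
  rw [wlen, ← hlength]
  exact exists_prod_mul_posWord_eq hw

end WordLength

section Action

variable {p : ℕ}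

lemma fgen_of_le {i : ℕ} {t : ℝ} (h : t ≤ i) : fgen p i t = t :=
  if_pos h

lemma fgen_of_ge {i : ℕ} {t : ℝ} (h : i + 1 ≤ t) : fgen p i t = t + p - 1 := by
  rcases h.eq_or_lt with rfl | h
  · rw [fgen, if_neg (by linarith), if_pos le_rfl]
    ring
  · rw [fgen, if_neg (by linarith), if_neg h.not_ge]

lemma fgen_of_mem_Icc {i : ℕ} {t : ℝ} (h : t ∈ Set.Icc (i : ℝ) (i + 1)) :
    fgen p i t = i + p * (t - i) := by
  rcases h.1.eq_or_lt with rfl | h'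
  · simp [fgen_of_le le_rfl]
  · rw [fgen, if_neg h'.not_ge, if_pos h.2]
    ring

lemma fgen_add_natCast (i n : ℕ) (t : ℝ) : fgen p (i + n) (t + n) = fgen p i t + n := by
  have h₁ : t + n ≤ (i + n : ℕ) ↔ t ≤ i := by simp
  have h₂ : t + n ≤ (i + n : ℕ) + 1 ↔ t ≤ i + 1 := by
    rw [Nat.cast_add, add_right_comm, add_le_add_iff_right]
  simp only [fgen, h₁, h₂]
  split_ifs <;> push_cast <;> ring

lemma exists_intCast_eq_fgen {i : ℕ} (k : ℤ) : ∃ m : ℤ, (m : ℝ) = fgen p i k := by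
  rcases le_or_gt k i with h | h
  · exact ⟨k, (fgen_of_le (by exact_mod_cast h)).symm⟩
  · refine ⟨k + p - 1, ?_⟩
    rw [fgen_of_ge (by exact_mod_cast h)]
    push_cast
    ring

variable [NeZero p]

lemma fgen_strictMono (p i : ℕ) [NeZero p] : StrictMono (fgen p i) := by
  have hp : (0 : ℝ) < p := Nat.cast_pos.mpr (NeZero.pos p)
  have hle : StrictMonoOn (fgen p i) (Set.Iic i) := fun s hs t ht hst => by
    rwa [fgen_of_le hs, fgen_of_le ht]
  have hmid : StrictMonoOn (fgen p i) (Set.Icc i (i + 1)) := fun s hs t ht hst => by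
    rw [fgen_of_mem_Icc hs, fgen_of_mem_Icc ht]
    gcongr
  have hge : StrictMonoOn (fgen p i) (Set.Ici (i + 1)) := fun s hs t ht hst => by
    rw [fgen_of_ge hs, fgen_of_ge ht]
    gcongr
  have hmid' := hle.union hmid isGreatest_Iic (isLeast_Icc (by linarith))
  rw [Set.Iic_union_Icc_eq_Iic (by linarith)] at hmid'
  exact hmid'.Iic_union_Ici hge

lemma fgen_surjective (p i : ℕ) [NeZero p] : Function.Surjective (fgen p i) := by
  have hp : (0 : ℝ) < p := Nat.cast_pos.mpr (NeZero.pos p)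
  intro t
  rcases le_total t i with h | h
  · exact ⟨t, fgen_of_le h⟩
  rcases le_total t (i + p) with h' | h'
  · refine ⟨i + (t - i) / p, ?_⟩
    have hdiv : (t - i) / p ≤ 1 := (div_le_one hp).mpr (by linarith)
    have hdiv' : 0 ≤ (t - i) / p := div_nonneg (by linarith) hp.le
    rw [fgen_of_mem_Icc ⟨by linarith, by linarith⟩]
    field_simp
    ring
  · refine ⟨t - p + 1, ?_⟩
    rw [fgen_of_ge (by linarith)]
    ring

lemma fgen_fgen {i j : ℕ} (h : i < j) (t : ℝ) :
    fgen p i (fgen p j t) = fgen p (j + (p - 1)) (fgen p i t) := by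
  have hij : (i : ℝ) + 1 ≤ j := by exact_mod_cast h
  have hp : ((p - 1 : ℕ) : ℝ) = p - 1 := Nat.cast_pred (NeZero.pos p)
  have hmono := (fgen_strictMono p i).monotone
  rcases le_total t j with ht | ht
  · have hle : fgen p i t ≤ (j + (p - 1) : ℕ) :=
      (hmono ht).trans_eq (by rw [fgen_of_ge hij]; push_cast [hp]; ring)
    rw [fgen_of_le ht, fgen_of_le hle]
  · have hge : (i : ℝ) + 1 ≤ fgen p j t :=
      hij.trans ((fgen_of_le le_rfl).ge.trans ((fgen_strictMono p j).monotone ht))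
    rw [fgen_of_ge hge, fgen_of_ge (hij.trans ht), add_sub_assoc, add_sub_assoc, ← hp,
      fgen_add_natCast]

/-- The permutation `(t, m) ↦ (f_i t, m - [t = i])` of `ℝ × ℤ`. Its inverse is the action of `x_i`:
besides moving the points of the line by `f_i⁻¹`, it counts the carets that are hung exactly at the
position `i`. -/
noncomputable def caretPerm (p i : ℕ) [NeZero p] : Equiv.Perm (ℝ × ℤ) :=
  Equiv.prodShear (Equiv.ofBijective _ ⟨(fgen_strictMono p i).injective, fgen_surjective p i⟩)
    fun t => Equiv.subRight (if t = i then 1 else 0)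

@[simp] lemma caretPerm_apply (i : ℕ) (z : ℝ × ℤ) :
    caretPerm p i z = (fgen p i z.1, z.2 - if z.1 = i then 1 else 0) := rfl

lemma semiconjBy_caretPerm {i j : ℕ} (h : i < j) :
    SemiconjBy (caretPerm p i) (caretPerm p j) (caretPerm p (j + (p - 1))) := by
  ext1 z
  obtain ⟨t, m⟩ := z
  have hp : ((p - 1 : ℕ) : ℝ) = p - 1 := Nat.cast_pred (NeZero.pos p)
  have hfix : fgen p j i = i := fgen_of_le (by exact_mod_cast h.le)
  have hshift : fgen p i j = (j + (p - 1) : ℕ) := by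
    rw [fgen_of_ge (by exact_mod_cast h)]; push_cast [hp]; ring
  have hi : fgen p j t = i ↔ t = i :=
    (fgen_strictMono p j).injective.eq_iff' hfix
  have hj : fgen p i t = (j + (p - 1) : ℕ) ↔ t = j :=
    (fgen_strictMono p i).injective.eq_iff' hshift
  simp only [Equiv.Perm.mul_apply, caretPerm_apply, fgen_fgen h, hi, hj, Prod.mk.injEq, true_and]
  ring

/-- The action of `F(p)` on `ℝ × ℤ` by `x_i ↦ (caretPerm p i)⁻¹`. -/
noncomputable def act (p : ℕ) [NeZero p] : FP p →* Equiv.Perm (ℝ × ℤ) :=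
  lift (fun i => (caretPerm p i)⁻¹) fun _ _ h =>
    (semiconjBy_caretPerm h).inv_inv_symm

@[simp] lemma act_xg (i : ℕ) : act p (xg p i) = (caretPerm p i)⁻¹ :=
  lift_xg _ _ i

lemma act_mul_xg_caretPerm (g : FP p) (i : ℕ) (z : ℝ × ℤ) :
    act p (g * xg p i) (caretPerm p i z) = act p g z := by
  rw [map_mul, act_xg, ← Equiv.Perm.mul_apply, inv_mul_cancel_right]

lemma caretPerm_pow_apply (i n : ℕ) (z : ℝ × ℤ) :
    (caretPerm p i ^ n) z = ((fgen p i)^[n] z.1, z.2 - if z.1 = i then (n : ℤ) else 0) := by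
  have hfix : ∀ t, fgen p i t = i ↔ t = i := fun t =>
    (fgen_strictMono p i).injective.eq_iff' (fgen_of_le le_rfl)
  induction n generalizing z with
  | zero => simp
  | succ n ih =>
    simp only [pow_succ, Equiv.Perm.mul_apply, caretPerm_apply, ih, hfix,
      Function.iterate_succ_apply]
    split_ifs <;> simp [sub_sub, add_comm]

lemma act_xg_pow_apply_of_le {i : ℕ} (n : ℕ) {t : ℝ} (h : t ≤ i) (m : ℤ) :
    act p (xg p i ^ n) (t, m) = (t, m + if t = i then (n : ℤ) else 0) := by
  rw [map_pow, act_xg, inv_pow, Equiv.Perm.inv_eq_iff_eq, caretPerm_pow_apply,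
    Function.iterate_fixed (fgen_of_le h), add_sub_cancel_right]

lemma act_apply_add (g : FP p) (t : ℝ) (m n : ℤ) :
    act p g (t, m + n) = ((act p g (t, m)).1, (act p g (t, m)).2 + n) := by
  let shift : Equiv.Perm (ℝ × ℤ) := (Equiv.refl ℝ).prodCongr (Equiv.addRight n)
  have hcomm : act p g ∈ Subgroup.centralizer {shift} := by
    refine map_mem_of_forall_xg (fun i => ?_) g
    rw [act_xg, inv_mem_iff, Subgroup.mem_centralizer_singleton_iff]
    ext z <;> simp [shift, sub_add_eq_add_sub]
  exact DFunLike.congr_fun (Subgroup.mem_centralizer_singleton_iff.mp hcomm) (t, m)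

lemma act_posWord_of_notMem_range_intCast {t : ℝ} (ht : t ∉ Set.range ((↑) : ℤ → ℝ)) (m : ℤ)
    (l : List ℕ) : (act p (posWord p l) (t, m)).1 ∉ Set.range ((↑) : ℤ → ℝ) ∧
      (act p (posWord p l) (t, m)).2 = m := by
  induction l with
  | nil => simpa using ht
  | cons i l ih =>
    obtain ⟨z, hz⟩ := (caretPerm p i).surjective (act p (posWord p l) (t, m))
    rw [← hz, caretPerm_apply] at ih
    have hz₁ : z.1 ∉ Set.range ((↑) : ℤ → ℝ) := by
      rintro ⟨k, hk⟩
      exact ih.1 (hk ▸ exists_intCast_eq_fgen k)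
    have hz₂ : z.1 ≠ i := fun h => hz₁ ⟨i, by simp [h]⟩
    rw [posWord_cons, map_mul, Equiv.Perm.mul_apply, ← hz, act_xg, ← Equiv.Perm.mul_apply,
      inv_mul_cancel]
    exact ⟨hz₁, by simpa [hz₂] using ih.2⟩

/-- The permutations of `α × ℤ` that preserve the second coordinate modulo `d`. -/
def sndModSubgroup (α : Type*) (d : ℕ) : Subgroup (Equiv.Perm (α × ℤ)) where
  carrier := {σ | ∀ z, ((σ z).2 : ZMod d) = z.2}
  one_mem' _ := rfl
  mul_mem' hσ hτ z := (hσ _).trans (hτ z)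
  inv_mem' {σ} hσ z := by
    rw [← hσ, ← Equiv.Perm.mul_apply, mul_inv_cancel, Equiv.Perm.one_apply]

variable {q d : ℕ} [NeZero q] (hpq : q - 1 = d * (p - 1))

lemma act_powHom_mem_sndModSubgroup (x : FP q) :
    act p (powHom hpq x) ∈ sndModSubgroup ℝ d := by
  refine map_mem_of_forall_xg (φ := (act p).comp (powHom hpq)) (fun i => ?_) x
  rw [MonoidHom.comp_apply, powHom_xg, map_pow, act_xg, inv_pow, inv_mem_iff]
  intro z
  rw [caretPerm_pow_apply]
  split_ifs <;> simp

lemma act_powHom_posWord_apply {i : ℕ} {l : List ℕ} (hl : ∀ a ∈ l, i ≤ a) :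
    act p (powHom hpq (posWord q l)) (i, 0) = ((i : ℝ), (d * l.count i : ℤ)) := by
  induction l with
  | nil => simp
  | cons a l ih =>
    rw [List.forall_mem_cons] at hl
    rw [posWord_cons, map_mul, map_mul, Equiv.Perm.mul_apply, ih hl.2, powHom_xg,
      act_xg_pow_apply_of_le d (Nat.cast_le.mpr hl.1), List.count_cons]
    rcases eq_or_ne i a with rfl | h
    · simp [mul_add]
    · simp [h, h.symm]

end Action

section Injectivity

variable {p q d : ℕ} [NeZero p] [NeZero d] (hpq : q - 1 = d * (p - 1))

lemma mem_of_powHom_posWord_eq [NeZero q] {i : ℕ} {u v : List ℕ} (hu : ∀ a ∈ u, i ≤ a)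
    (hv : ∀ a ∈ v, i ≤ a) (h : powHom hpq (posWord q u) = powHom hpq (posWord q v))
    (hi : i ∈ u) : i ∈ v := by
  have hcount : (d * u.count i : ℤ) = d * v.count i := congr_arg Prod.snd <|
    (act_powHom_posWord_apply hpq hu).symm.trans (h ▸ act_powHom_posWord_apply hpq hv)
  have hd : (d : ℤ) ≠ 0 := NeZero.ne _
  rw [← List.count_pos_iff] at hi ⊢
  rwa [← Nat.cast_inj.mp (mul_left_cancel₀ hd hcount)]

lemma eq_of_powHom_posWord_eq [NeZero q] {u v : List ℕ} (hu : u.Pairwise (· ≤ ·))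
    (hv : v.Pairwise (· ≤ ·)) (h : powHom hpq (posWord q u) = powHom hpq (posWord q v)) :
    u = v := by
  have hcons {i : ℕ} {l : List ℕ} (hl : (i :: l).Pairwise (· ≤ ·)) : ∀ a ∈ i :: l, i ≤ a := by
    simpa using (List.pairwise_cons.mp hl).1
  induction u generalizing v with
  | nil =>
    cases v with
    | nil => rfl
    | cons j v =>
      cases mem_of_powHom_posWord_eq hpq (hcons hv) (by simp) h.symm List.mem_cons_self
  | cons i u ih =>
    cases v with
    | nil => cases mem_of_powHom_posWord_eq hpq (hcons hu) (by simp) h List.mem_cons_self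
    | cons j v =>
      obtain rfl : i = j := by
        rcases le_total i j with hij | hji
        · exact hij.antisymm <| hcons hv i <| mem_of_powHom_posWord_eq hpq (hcons hu)
            (fun a ha => hij.trans (hcons hv a ha)) h List.mem_cons_self
        · exact hji.antisymm' <| hcons hu j <| mem_of_powHom_posWord_eq hpq (hcons hv)
            (fun a ha => hji.trans (hcons hu a ha)) h.symm List.mem_cons_self
      rw [posWord_cons, posWord_cons, map_mul, map_mul, mul_right_inj] at h
      rw [ih hu.of_cons hv.of_cons h]

lemma powHom_injective [q.AtLeastTwo] : Function.Injective (powHom hpq) := by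
  refine (injective_iff_map_eq_one _).mpr fun x hx => ?_
  obtain ⟨u, hu, v, hv, h⟩ := exists_mul_posWord_eq x
  obtain ⟨u', -, hu', hu_eq⟩ := exists_sorted_posWord_eq (p := q) hu
  obtain ⟨v', -, hv', hv_eq⟩ := exists_sorted_posWord_eq (p := q) hv
  rw [← hu_eq, ← hv_eq] at h
  have huv : powHom hpq (posWord q v') = powHom hpq (posWord q u') := by
    rw [← h, map_mul, hx, one_mul]
  rwa [eq_of_powHom_posWord_eq hpq hv' hu' huv, mul_eq_right] at h

end Injectivity

section Deficit

variable {p : ℕ} [NeZero p]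

/-- The left depth of the leaf `k` of the forest of `g`, that is, the number of consecutive leftmost
edges above it when `g` is positive: the second coordinate of `act p g (k, 0)`. -/
noncomputable def leafDepth (g : FP p) (k : ℕ) : ℤ := (act p g ((k : ℝ), 0)).2

lemma leafDepth_mul_xg_of_lt (g : FP p) {i k : ℕ} (h : k < i) :
    leafDepth (g * xg p i) k = leafDepth g k := by
  have hk : caretPerm p i ((k : ℝ), 0) = ((k : ℝ), 0) := by
    simp [fgen_of_le (Nat.cast_le.mpr h.le : (k : ℝ) ≤ i), h.ne]
  rw [leafDepth, leafDepth, ← act_mul_xg_caretPerm g i, hk]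

lemma leafDepth_mul_xg_add_of_lt (g : FP p) {i k : ℕ} (h : i < k) :
    leafDepth (g * xg p i) (k + (p - 1)) = leafDepth g k := by
  have hk : caretPerm p i ((k : ℝ), 0) = (((k + (p - 1) : ℕ) : ℝ), 0) := by
    have hik : (i : ℝ) + 1 ≤ k := by exact_mod_cast h
    simp [fgen_of_ge hik, h.ne', Nat.cast_pred (NeZero.pos p), add_sub_assoc]
  rw [leafDepth, leafDepth, ← act_mul_xg_caretPerm g i, hk]

lemma leafDepth_mul_xg_self (g : FP p) (i : ℕ) :
    leafDepth (g * xg p i) i = leafDepth g i + 1 := by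
  have hi : caretPerm p i ((i : ℝ), 0 + 1) = ((i : ℝ), 0) := by simp [fgen_of_le le_rfl]
  rw [leafDepth, ← hi, act_mul_xg_caretPerm, act_apply_add, leafDepth]

lemma leafDepth_posWord_mul_xg_of_mem_Ioo (l : List ℕ) {i k : ℕ} (h : k ∈ Set.Ioo i (i + p)) :
    leafDepth (posWord p l * xg p i) k = 0 := by
  obtain ⟨⟨t, m⟩, hz⟩ := (caretPerm p i).surjective ((k : ℝ), 0)
  obtain ⟨ht, hm⟩ := Prod.mk.inj ((caretPerm_apply i _).symm.trans hz)
  have hik : (i : ℝ) < k := Nat.cast_lt.mpr h.1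
  have hkp : (k : ℝ) < i + p := by exact_mod_cast h.2
  have hit : i < t := (fgen_strictMono p i).lt_iff_lt.mp (by rwa [fgen_of_le le_rfl, ht])
  have hti : t < i + 1 := (fgen_strictMono p i).lt_iff_lt.mp (by
    rw [ht, fgen_of_ge le_rfl]; linarith)
  have hnotInt : t ∉ Set.range ((↑) : ℤ → ℝ) := by
    rintro ⟨n, rfl⟩
    have h₁ : (i : ℤ) < n := by exact_mod_cast hit
    have h₂ : n < (i : ℤ) + 1 := by exact_mod_cast hti
    omega
  have hm0 : m = 0 := by simpa [hit.ne'] using hm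
  rw [leafDepth, ← hz, act_mul_xg_caretPerm, hm0]
  exact (act_posWord_of_notMem_range_intCast hnotInt 0 l).2

lemma leafDepth_powHom_mul {q d : ℕ} [NeZero q] (hpq : q - 1 = d * (p - 1)) (x : FP q) (g : FP p)
    (k : ℕ) : (leafDepth (powHom hpq x * g) k : ZMod d) = leafDepth g k := by
  rw [leafDepth, map_mul, Equiv.Perm.mul_apply]
  exact act_powHom_mem_sndModSubgroup hpq x _

variable {d : ℕ} [NeZero d]

/-- The least number of carets to be added to the leaf `k` of the forest of `g`, each on the
leftmost leaf of the previous one, so that its left depth becomes a multiple of `d ≥ 1`. -/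
noncomputable def deficit (d : ℕ) (g : FP p) (k : ℕ) : ℕ := (-(leafDepth g k : ZMod d)).val

lemma deficit_lt (g : FP p) (k : ℕ) : deficit d g k < d := ZMod.val_lt _

lemma deficit_mul_xg_self (g : FP p) (i : ℕ) :
    deficit d (g * xg p i) i + 1 = deficit d g i ∨
      deficit d g i = 0 ∧ deficit d (g * xg p i) i + 1 = d := by
  have h := zmod_val_sub_one_add_one (-(leafDepth g i : ZMod d))
  rwa [← neg_add', ← Int.cast_one, ← Int.cast_add, ← leafDepth_mul_xg_self] at h

end Deficit

section LeafCombs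

variable {p : ℕ}

/-- The descending product `x_{b-1}^{e (b-1)} ⋯ x_a^{e a}`, whose forest has a left comb of `e k`
carets hanging from each leaf `k ∈ [a, b)`. -/
def leafCombs (p : ℕ) (e : ℕ → ℕ) (a b : ℕ) : FP p :=
  ((List.Ico a b).reverse.map fun k => xg p k ^ e k).prod

@[simp] lemma leafCombs_self (e : ℕ → ℕ) (a : ℕ) : leafCombs p e a a = 1 := by
  simp [leafCombs]

lemma leafCombs_mul_leafCombs (e : ℕ → ℕ) {a b c : ℕ} (hab : a ≤ b) (hbc : b ≤ c) :
    leafCombs p e b c * leafCombs p e a b = leafCombs p e a c := by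
  simp [leafCombs, ← List.Ico.append_consecutive hab hbc]

lemma leafCombs_succ (e : ℕ → ℕ) {a b : ℕ} (hab : a ≤ b) :
    leafCombs p e a (b + 1) = xg p b ^ e b * leafCombs p e a b := by
  simp [leafCombs, List.Ico.succ_top hab]

lemma leafCombs_congr {e e' : ℕ → ℕ} {a b : ℕ} (h : ∀ k ∈ Set.Ico a b, e k = e' k) :
    leafCombs p e a b = leafCombs p e' a b := by
  refine congr_arg List.prod (List.map_congr_left fun k hk => ?_)
  rw [h k (List.Ico.mem.mp (List.mem_reverse.mp hk))]

lemma leafCombs_eq_one {e : ℕ → ℕ} {a b : ℕ} (h : ∀ k ∈ Set.Ico a b, e k = 0) :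
    leafCombs p e a b = 1 := by
  rw [leafCombs_congr (e' := 0) h]
  simp [leafCombs]

lemma leafCombs_eq (e : ℕ → ℕ) {i b : ℕ} (h : i < b) :
    leafCombs p e 0 b = leafCombs p e (i + 1) b * (xg p i ^ e i * leafCombs p e 0 i) := by
  rw [← leafCombs_succ e i.zero_le, leafCombs_mul_leafCombs e (i + 1).zero_le h]

variable [NeZero p]

lemma semiconjBy_xg_leafCombs {e e' : ℕ → ℕ} {i : ℕ} (h : ∀ k, i < k → e' (k + (p - 1)) = e k)
    {b : ℕ} (hb : i < b) :
    SemiconjBy (xg p i) (leafCombs p e' (i + 1 + (p - 1)) (b + (p - 1)))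
      (leafCombs p e (i + 1) b) := by
  induction b, hb using Nat.le_induction with
  | base => simp
  | succ b hb ih =>
    rw [Nat.add_right_comm b, leafCombs_succ e hb, leafCombs_succ e' (by omega), h b hb]
    exact ((semiconjBy_xg hb).pow_right _).mul_right ih

lemma semiconjBy_leafCombs_xg (e : ℕ → ℕ) {i j : ℕ} (h : i ≤ j) :
    SemiconjBy (leafCombs p e 0 i) (xg p (j + (∑ k ∈ Finset.range i, e k) * (p - 1)))
      (xg p j) := by
  induction i generalizing j with
  | zero => simp
  | succ i ih =>
    rw [leafCombs_succ e i.zero_le, Finset.sum_range_succ, add_comm _ (e i), add_mul, ← add_assoc]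
    exact (semiconjBy_xg_pow h (e i)).mul_left (ih (by omega))

/-- If `e` and `e'` are the combs hung on the leaves of a forest before and after its leaf `i` gets
a caret, then that caret can be absorbed into the comb of the leaf `i`. -/
lemma xg_mul_leafCombs {e e' : ℕ → ℕ} {i b : ℕ} (hib : i < b) (hlt : ∀ k < i, e' k = e k)
    (hmid : ∀ k ∈ Set.Ioo i (i + p), e' k = 0) (hgt : ∀ k, i < k → e' (k + (p - 1)) = e k) :
    xg p i * leafCombs p e' 0 (b + (p - 1)) =
      leafCombs p e (i + 1) b * (xg p i ^ (e' i + 1) * leafCombs p e 0 i) := by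
  have hp := NeZero.pos p
  have hnew : leafCombs p e' (i + 1) (i + 1 + (p - 1)) = 1 :=
    leafCombs_eq_one fun k hk => hmid k ⟨hk.1, by have := hk.2; omega⟩
  have hold : leafCombs p e' 0 i = leafCombs p e 0 i := leafCombs_congr fun k hk => hlt k hk.2
  rw [leafCombs_eq e' (by omega : i < b + (p - 1)),
    ← leafCombs_mul_leafCombs e' (Nat.le_add_right _ (p - 1)) (by omega), hnew, hold, mul_one,
    ← mul_assoc, (semiconjBy_xg_leafCombs hgt hib).eq, mul_assoc, ← mul_assoc (xg p i), ← pow_succ']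

end LeafCombs

section Completion

variable {p q d : ℕ} [NeZero p]

lemma xg_mul_leafCombs_deficit (l : List ℕ) {i b : ℕ} (hib : i < b) :
    xg p i * leafCombs p (deficit d (posWord p l * xg p i)) 0 (b + (p - 1)) =
      leafCombs p (deficit d (posWord p l)) (i + 1) b *
        (xg p i ^ (deficit d (posWord p l * xg p i) i + 1) *
          leafCombs p (deficit d (posWord p l)) 0 i) := by
  refine xg_mul_leafCombs hib (fun k hk => ?_) (fun k hk => ?_) (fun k hk => ?_)
  · rw [deficit, deficit, leafDepth_mul_xg_of_lt _ hk]
  · rw [deficit, leafDepth_posWord_mul_xg_of_mem_Ioo l hk, Int.cast_zero, neg_zero, ZMod.val_zero]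
  · rw [deficit, deficit, leafDepth_mul_xg_add_of_lt _ hk]

variable [NeZero q] [NeZero d] (hpq : q - 1 = d * (p - 1))

include hpq in
lemma add_sum_deficit_mul_le (g : FP p) {i m : ℕ} (hi : i ≤ m) :
    i + (∑ k ∈ Finset.range i, deficit d g k) * (p - 1) ≤ m * q := by
  have hsum : ∑ k ∈ Finset.range i, deficit d g k ≤ i * d := by
    simpa using Finset.sum_le_card_nsmul (Finset.range i) _ d fun k _ => (deficit_lt g k).le
  calc i + (∑ k ∈ Finset.range i, deficit d g k) * (p - 1)
      ≤ i + i * d * (p - 1) := by gcongr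
    _ = i * (q - 1 + 1) := by rw [hpq]; ring
    _ = i * q := by rw [Nat.sub_add_cancel NeZero.one_le]
    _ ≤ m * q := by gcongr

/-- When a caret is added to the leaf `i`, either it absorbs one caret of the comb that completed
this leaf, or this comb was empty and the caret starts a new comb, of `d` carets. -/
lemma exists_powHom_posWord_eq_posWord_mul_leafCombs {m : ℕ} {l : List ℕ} (hl : ∀ i ∈ l, i ≤ m) :
    ∀ᶠ b in Filter.atTop, ∃ a ∈ boundedWords l.length (m * q),
      powHom hpq (posWord q a) = posWord p l * leafCombs p (deficit d (posWord p l)) 0 b := by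
  induction l using List.reverseRecOn with
  | nil =>
    have hcombs : ∀ b, leafCombs p (deficit d (1 : FP p)) 0 b = 1 := fun b =>
      leafCombs_eq_one fun k _ => by simp [deficit, leafDepth]
    exact Filter.Eventually.of_forall fun b => ⟨[], nil_mem_boundedWords _ _, by simp [hcombs]⟩
  | append_singleton l i ih =>
    have hi : i ≤ m := hl i (by simp)
    have hshift := Filter.tendsto_sub_atTop_nat (p - 1)
    filter_upwards [hshift.eventually (ih fun j hj => hl j (by simp [hj])),
      Filter.eventually_ge_atTop (i + 1 + (p - 1))] with b ⟨a, ha, h⟩ hb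
    have hib : i < b - (p - 1) := by omega
    have hcaret := xg_mul_leafCombs_deficit (p := p) (d := d) l hib
    rw [Nat.sub_add_cancel (by omega)] at hcaret
    rw [leafCombs_eq _ hib] at h
    rw [posWord_append, posWord_cons, posWord_nil, mul_one, List.length_append, mul_assoc, hcaret]
    rcases deficit_mul_xg_self (d := d) (posWord p l) i with hstep | ⟨hzero, hstep⟩
    · exact ⟨a, boundedWords_mono (by simp) le_rfl ha, by rw [h, hstep]⟩
    · set j := i + (∑ k ∈ Finset.range i, deficit d (posWord p l) k) * (p - 1)
      have hj : [j] ∈ boundedWords 1 (m * q) := by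
        simpa [boundedWords] using add_sum_deficit_mul_le hpq (posWord p l) hi
      have hconj := (semiconjBy_leafCombs_xg (p := p) (deficit d (posWord p l))
        (le_refl i)).pow_right d
      refine ⟨a ++ [j], append_mem_boundedWords ha hj, ?_⟩
      rw [posWord_append, map_mul, h, posWord_cons, posWord_nil, mul_one, powHom_xg, hzero,
        pow_zero, one_mul, hstep, ← hconj.eq, mul_assoc, mul_assoc]

end Completion

section QuasiIsometry

variable {p q d : ℕ} [p.AtLeastTwo] [q.AtLeastTwo] (hpq : q - 1 = d * (p - 1))

lemma wlen_powHom_le_mul_wlen (x : FP q) :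
    wlen p (powHom hpq x) ≤ d * (2 * p * q) * wlen q x := by
  refine wordLength_map_le (closure_xg_lt q) (closure_xg_lt p) (powHom hpq) ?_ x
  rintro _ ⟨i, hi, rfl⟩
  rw [powHom_xg]
  calc wlen p (xg p i ^ d) ≤ d * wlen p (xg p i) := wordLength_pow_le (closure_xg_lt p) _ d
    _ ≤ d * (2 * p * (1 + i)) := by gcongr; exact wlen_xg_le i
    _ ≤ d * (2 * p * q) := by gcongr; omega

variable [NeZero d]

lemma exists_mul_posWord_eq_of_powHom (x : FP q) :
    ∃ u ∈ boundedWords (wlen p (powHom hpq x)) (wlen p (powHom hpq x) * p * q),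
      ∃ v ∈ boundedWords (wlen p (powHom hpq x)) (wlen p (powHom hpq x) * p * q),
        x * posWord q v = posWord q u := by
  obtain ⟨u, hu, v, hv, h⟩ := exists_mul_posWord_eq (powHom hpq x)
  have hdeficit : deficit d (posWord p u) = deficit d (posWord p v) := by
    ext k
    rw [deficit, deficit, ← h, leafDepth_powHom_mul]
  obtain ⟨b, ⟨u', hu', hu_eq⟩, ⟨v', hv', hv_eq⟩⟩ :=
    ((exists_powHom_posWord_eq_posWord_mul_leafCombs hpq hu.2).and
      (exists_powHom_posWord_eq_posWord_mul_leafCombs hpq hv.2)).exists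
  refine ⟨u', boundedWords_mono hu.1 le_rfl hu', v', boundedWords_mono hv.1 le_rfl hv', ?_⟩
  apply powHom_injective hpq
  rw [map_mul, hu_eq, hv_eq, hdeficit, ← mul_assoc, h]

lemma wlen_le_mul_wlen_powHom (x : FP q) :
    wlen q x ≤ 4 * q * (1 + p * q) * wlen p (powHom hpq x) := by
  obtain ⟨u, hu, v, hv, h⟩ := exists_mul_posWord_eq_of_powHom hpq x
  have hS := closure_xg_lt q
  calc wlen q x = wlen q (posWord q u * (posWord q v)⁻¹) := by rw [← h, mul_inv_cancel_right]
    _ ≤ wlen q (posWord q u) + wlen q (posWord q v) :=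
      (wordLength_mul_le hS _ _).trans (Nat.add_le_add_left (wordLength_inv_le hS _) _)
    _ ≤ _ := add_le_add (wlen_posWord_le hu) (wlen_posWord_le hv)
    _ = 4 * q * (1 + p * q) * wlen p (powHom hpq x) := by ring

end QuasiIsometry

end Thompson

/-- Proposition 9. If `q - 1 = d(p - 1)`, the assignment `x_i ↦ x_i^d`
determines a group homomorphism `j₂ : F(q) → F(p)` which is a quasi-isometric embedding. -/
theorem statement5 (p q d : ℕ) (hp : 2 ≤ p) (hq : 2 ≤ q) (hd : 1 ≤ d)
    (hpq : q - 1 = d * (p - 1)) :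
    ∃ j2 : FP q →* FP p, (∀ i : ℕ, j2 (xg q i) = xg p i ^ d) ∧
      Function.Injective j2 ∧
      ∃ C : ℝ, 1 ≤ C ∧ ∀ x : FP q,
        (1 / C) * (wlen q x : ℝ) ≤ (wlen p (j2 x) : ℝ) ∧
          (wlen p (j2 x) : ℝ) ≤ C * (wlen q x : ℝ) := by
  have : p.AtLeastTwo := ⟨hp⟩
  have : q.AtLeastTwo := ⟨hq⟩
  have : NeZero d := ⟨by omega⟩
  set A := d * (2 * p * q)
  set B := 4 * q * (1 + p * q)
  have hA : 1 ≤ A := Nat.one_le_iff_ne_zero.mpr (NeZero.ne _)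
  refine ⟨Thompson.powHom hpq, Thompson.powHom_xg hpq, Thompson.powHom_injective hpq,
    (A + B : ℕ), by exact_mod_cast hA.trans (Nat.le_add_right A B), fun x => ⟨?_, ?_⟩⟩
  · rw [one_div, inv_mul_le_iff₀ (by positivity)]
    exact_mod_cast (Thompson.wlen_le_mul_wlen_powHom hpq x).trans
      (Nat.mul_le_mul_right _ (Nat.le_add_left B A))
  · exact_mod_cast (Thompson.wlen_powHom_le_mul_wlen hpq x).trans
      (Nat.mul_le_mul_right _ (Nat.le_add_right A B))
end
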